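/- Assuming the Riemann Hypothesis, for every complex number s with Re(s) > 1/2 such that s - 1 does not lie on the nonpositive real axis (i.e., s is not a real number in (1/2, 1]), one has 1/ζ(s) = lim_{x → ∞} exp(−E₁((s-1)·log x)) · ∏_{p ≤ x, p prime} (1 - p^{-s}), where the product runs over all primes p ≤ x. -/

import Mathlib

open Filter

/-- The exponential integral `E₁(z) = -γ - log z - ∑_{k=1}^∞ (-z)^k / (k·k!)`. -/
noncomputable def expIntegralE1 (z : ℂ) : ℂ :=
  -(Real.eulerMascheroniConstant : ℂ) - Complex.log z -
    ∑' k : ℕ, (-z) ^ (k + 1) / (((k + 1) * Nat.factorial (k + 1) : ℕ) : ℂ)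

section partA
open Complex Set MeasureTheory Topology Asymptotics

noncomputable def fracFun (t : ℝ) : ℂ := (Ioi (1:ℝ)).indicator (fun t => ((Int.fract t : ℝ) : ℂ)) t

lemma fracFun_norm_le (t : ℝ) : ‖fracFun t‖ ≤ 1 := by
  unfold fracFun
  by_cases h : t ∈ Ioi (1:ℝ)
  · rw [indicator_of_mem h, Complex.norm_real, Real.norm_eq_abs, abs_of_nonneg (Int.fract_nonneg t)]
    exact (Int.fract_lt_one t).le
  · rw [indicator_of_notMem h]; simp

lemma fracFun_meas : Measurable fracFun := by
  unfold fracFun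
  exact Measurable.indicator (by fun_prop) measurableSet_Ioi

lemma fracFun_locInt : LocallyIntegrableOn fracFun (Ioi 0) := by
  apply LocallyIntegrable.locallyIntegrableOn
  refine (locallyIntegrable_const (1:ℝ)).mono fracFun_meas.aestronglyMeasurable ?_
  filter_upwards with t
  simpa using fracFun_norm_le t

lemma fracFun_top : fracFun =O[atTop] (fun t : ℝ => t ^ (-(0:ℝ))) := by
  refine IsBigO.of_bound 1 ?_
  filter_upwards with t
  simpa using fracFun_norm_le t

lemma fracFun_bot (b : ℝ) : fracFun =O[𝓝[>] 0] (fun t : ℝ => t ^ (-b)) := by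
  refine IsBigO.of_bound 1 ?_
  have : ∀ᶠ t : ℝ in 𝓝[>] 0, t < 1 := by
    apply eventually_nhdsWithin_of_eventually_nhds
    exact eventually_lt_nhds one_pos
  filter_upwards [this] with t ht
  have : fracFun t = 0 := by
    unfold fracFun
    rw [indicator_of_notMem]; simp [ht.le]
  rw [this]; simp

lemma frac_diff {s : ℂ} (hs : 0 < s.re) : DifferentiableAt ℂ (fun s => mellin fracFun (-s)) s := by
  have := mellin_differentiableAt_of_isBigO_rpow (s := -s) (a := 0) (b := -s.re - 1) fracFun_locInt
    fracFun_top (by simpa using hs) (fracFun_bot _) (by simp)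
  exact DifferentiableAt.comp (g := mellin fracFun) (f := fun s : ℂ => -s) s this differentiableAt_id.neg

lemma frac_eq (s : ℂ) : mellin fracFun (-s) =
    ∫ t in Ioi (1:ℝ), ((Int.fract t : ℝ) : ℂ) * (t:ℂ) ^ (-(s+1)) := by
  unfold mellin
  have : ∀ t : ℝ, (t:ℂ) ^ (-s-1) • fracFun t =
      (Ioi (1:ℝ)).indicator (fun t => ((Int.fract t : ℝ) : ℂ) * (t:ℂ) ^ (-(s+1))) t := by
    intro t
    unfold fracFun
    by_cases h : t ∈ Ioi (1:ℝ)
    · rw [indicator_of_mem h, indicator_of_mem h, smul_eq_mul, mul_comm]; congr 2; ring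
    · rw [indicator_of_notMem h, indicator_of_notMem h]; simp
  simp_rw [this]
  rw [setIntegral_indicator measurableSet_Ioi]
  congr 2
  ext x; simp only [mem_inter_iff, mem_Ioi]; constructor
  · exact fun h => h.2
  · exact fun h => ⟨by linarith, h⟩

lemma frac_norm_le {s : ℂ} (hs : 1/2 ≤ s.re) : ‖mellin fracFun (-s)‖ ≤ 2 := by
  rw [frac_eq]
  have hI : IntegrableOn (fun t : ℝ => t ^ (-(s.re + 1))) (Ioi 1) :=
    integrableOn_Ioi_rpow_of_lt (by linarith) one_pos
  calc _ ≤ ∫ t in Ioi (1:ℝ), t ^ (-(s.re + 1)) := by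
        apply norm_integral_le_of_norm_le hI
        refine (ae_restrict_mem measurableSet_Ioi).mono fun t ht => ?_
        have ht0 : (0:ℝ) < t := lt_trans one_pos ht
        rw [norm_mul, Complex.norm_real, Real.norm_eq_abs, abs_of_nonneg (Int.fract_nonneg t),
          Complex.norm_cpow_eq_rpow_re_of_pos ht0]
        simp only [neg_re, add_re, one_re]
        have := (Int.fract_lt_one t).le
        have h2 := Real.rpow_nonneg ht0.le (-(s.re+1))
        nlinarith
    _ = 1 / s.re := by
        rw [integral_Ioi_rpow_of_lt (by linarith) one_pos]
        simp
    _ ≤ 2 := by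
        rw [div_le_iff₀ (by linarith)]; linarith

lemma zeta1_eq_of_one_lt {s : ℂ} (hs : 1 < s.re) :
    riemannZeta₁ s = s - s * (s - 1) * mellin fracFun (-s) := by
  have hs1 : s ≠ 1 := by rintro rfl; simp at hs
  have h1 : s - 1 ≠ 0 := sub_ne_zero.mpr hs1
  have hz : riemannZeta₁ s = (s - 1) * riemannZeta s := by
    rw [riemannZeta_eq_inv_sub_mul hs1]; field_simp
  rw [hz, ← LSeries_one_eq_riemannZeta hs]
  have key := LSeries_eq_mul_integral_of_nonneg (fun _ => (1:ℝ)) (r := 1) zero_le_one hs (by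
    refine IsBigO.of_bound 1 ?_
    filter_upwards with n
    simp) (by simp)
  have e1 : LSeries (fun n : ℕ => (((fun _ => (1:ℝ)) n : ℝ) : ℂ)) s = LSeries 1 s := by
    congr 1
  rw [e1] at key
  rw [key, frac_eq]
  have hint1 : IntegrableOn (fun t : ℝ => (t:ℂ) ^ (-s)) (Ioi 1) :=
    integrableOn_Ioi_cpow_of_lt (by simpa using hs) one_pos
  have hint2 : IntegrableOn (fun t : ℝ => ((Int.fract t : ℝ) : ℂ) * (t:ℂ) ^ (-(s+1))) (Ioi 1) := by
    have hI : IntegrableOn (fun t : ℝ => (t:ℂ) ^ (-(s + 1))) (Ioi 1) :=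
      integrableOn_Ioi_cpow_of_lt (by simp; linarith) one_pos
    refine Integrable.bdd_mul (c := 1) hI ?_ ?_
    · exact Measurable.aestronglyMeasurable (by fun_prop)
    · filter_upwards with t
      rw [Complex.norm_real, Real.norm_eq_abs, abs_of_nonneg (Int.fract_nonneg t)]
      exact (Int.fract_lt_one t).le
  have e2 : ∫ t in Ioi (1 : ℝ), (∑ k ∈ Finset.Icc 1 ⌊t⌋₊, (((fun _ => (1:ℝ)) k : ℝ) : ℂ)) * (t:ℂ) ^ (-(s + 1))
      = ∫ t in Ioi (1 : ℝ), ((t:ℂ) ^ (-s) - ((Int.fract t : ℝ) : ℂ) * (t:ℂ) ^ (-(s+1))) := by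
    apply setIntegral_congr_fun measurableSet_Ioi
    intro t ht
    have ht0 : (0:ℝ) < t := lt_trans one_pos ht
    have htc : (t:ℂ) ≠ 0 := by exact_mod_cast ht0.ne'
    simp only [ofReal_one, Finset.sum_const, Nat.card_Icc, add_tsub_cancel_right, nsmul_eq_mul,
      mul_one]
    have e3 : (t:ℂ) ^ (-s) = t * (t:ℂ) ^ (-(s+1)) := by
      rw [show -s = 1 + -(s+1) by ring, cpow_add _ _ htc, cpow_one]
    have e4 : ((⌊t⌋₊ : ℕ) : ℂ) = t - ((Int.fract t : ℝ) : ℂ) := by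
      have h : ((⌊t⌋₊ : ℕ) : ℝ) = t - Int.fract t := by
        rw [Int.self_sub_fract, natCast_floor_eq_intCast_floor ht0.le]
      rw [← Complex.ofReal_sub, ← h]; simp
    rw [e3, e4]; ring
  rw [e2, integral_sub hint1 hint2, integral_Ioi_cpow_of_lt (by simpa using hs) one_pos]
  simp only [ofReal_one, one_cpow]
  have : -s + 1 ≠ 0 := by intro h; apply h1; linear_combination -h
  field_simp
  ring

lemma zeta1_eq {s : ℂ} (hs : 0 < s.re) :
    riemannZeta₁ s = s - s * (s - 1) * mellin fracFun (-s) := by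
  have hop : IsOpen {z : ℂ | 0 < z.re} := isOpen_lt continuous_const continuous_re
  have h1 : AnalyticOnNhd ℂ riemannZeta₁ {z : ℂ | 0 < z.re} :=
    differentiable_riemannZeta₁.differentiableOn.analyticOnNhd hop
  have h2 : AnalyticOnNhd ℂ (fun s => s - s * (s - 1) * mellin fracFun (-s)) {z : ℂ | 0 < z.re} := by
    apply DifferentiableOn.analyticOnNhd _ hop
    intro z hz
    have := frac_diff hz
    apply DifferentiableAt.differentiableWithinAt
    fun_prop
  have hconn : IsPreconnected {z : ℂ | 0 < z.re} := (convex_halfSpace_re_gt 0).isPreconnected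
  have h2m : (2:ℂ) ∈ {z : ℂ | 0 < z.re} := by simp
  refine h1.eqOn_of_preconnected_of_eventuallyEq h2 hconn h2m ?_ hs
  have : {z : ℂ | 1 < z.re} ∈ 𝓝 (2:ℂ) :=
    (isOpen_lt continuous_const continuous_re).mem_nhds (by simp)
  filter_upwards [this] with z hz
  exact zeta1_eq_of_one_lt hz

lemma zeta1_norm_le {s : ℂ} (hs : 1/2 ≤ s.re) :
    ‖riemannZeta₁ s‖ ≤ ‖s‖ + 2 * ‖s‖ * ‖s - 1‖ := by
  rw [zeta1_eq (by linarith)]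
  calc _ ≤ ‖s‖ + ‖s * (s - 1) * mellin fracFun (-s)‖ := norm_sub_le _ _
    _ ≤ _ := by
      rw [norm_mul, norm_mul]
      have := frac_norm_le hs
      have h2 : 0 ≤ ‖s‖ * ‖s-1‖ := by positivity
      nlinarith

lemma zeta1_ne_zero (RH : RiemannHypothesis) {s : ℂ} (hs : 1/2 < s.re) : riemannZeta₁ s ≠ 0 := by
  by_cases h1 : s = 1
  · rw [h1]; simp
  intro h0
  have hz : riemannZeta s = 0 := by rw [riemannZeta_eq_inv_sub_mul h1, h0, mul_zero]
  have := RH s hz (by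
    rintro ⟨n, rfl⟩
    have : (-2 * ((n:ℂ) + 1)).re = -2 * ((n:ℝ)+1) := by simp
    rw [this] at hs
    have : (0:ℝ) ≤ n := n.cast_nonneg
    linarith) h1
  linarith

lemma zeta1_center (t : ℝ) : 1/4 ≤ ‖riemannZeta₁ (2 + t * I)‖ := by
  set s : ℂ := 2 + t * I with hsdef
  have hre : s.re = 2 := by simp [hsdef]
  have hs1 : s ≠ 1 := by intro h; rw [h] at hre; norm_num at hre
  have h1 : s - 1 ≠ 0 := sub_ne_zero.mpr hs1
  have hz : riemannZeta₁ s = (s - 1) * riemannZeta s := by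
    rw [riemannZeta_eq_inv_sub_mul hs1]; field_simp
  have hn1 : 1 ≤ ‖s - 1‖ := by
    have := Complex.abs_re_le_norm (s-1)
    simp [hre] at this
    norm_num at this
    exact this
  have hsum : HasSum (fun n : ℕ => (1:ℝ) / ((n:ℝ) + 1 + 1)^2) (Real.pi^2/6 - 1) := by
    have h := hasSum_zeta_two
    rw [← hasSum_nat_add_iff' 2] at h
    simp [Finset.sum_range_succ] at h
    have e : (fun n : ℕ => (1:ℝ) / ((n:ℝ) + 1 + 1)^2) = fun n : ℕ => (((n:ℝ) + 2)^2)⁻¹ := by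
      ext n; rw [one_div]; congr 2; ring
    rw [e]; exact h
  have hzs := zeta_eq_tsum_one_div_nat_add_one_cpow (s := s) (by rw [hre]; norm_num)
  have hnorm : ∀ n : ℕ, ‖1 / ((n:ℂ) + 1 + 1) ^ s‖ = (1:ℝ) / ((n:ℝ) + 1 + 1)^2 := by
    intro n
    have : ((n:ℂ) + 1 + 1) = (((n:ℝ) + 1 + 1 : ℝ) : ℂ) := by push_cast; ring
    rw [this, norm_div, norm_one, Complex.norm_cpow_eq_rpow_re_of_pos (by positivity), hre]
    norm_num
  have hS : Summable (fun n : ℕ => 1 / ((n:ℂ) + 1) ^ s) := by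
    rw [← summable_nat_add_iff 1]
    apply Summable.of_norm
    refine hsum.summable.congr fun n => ?_
    rw [← hnorm]; push_cast; rfl
  have hz2 : riemannZeta s - 1 = ∑' n : ℕ, 1 / ((n:ℂ) + 1 + 1) ^ s := by
    rw [hzs, hS.tsum_eq_zero_add]
    simp
  have hb : ‖riemannZeta s - 1‖ ≤ Real.pi^2/6 - 1 := by
    rw [hz2]
    exact tsum_of_norm_bounded hsum (fun n => (hnorm n).le)
  have hpi : Real.pi^2/6 - 1 ≤ 3/4 := by
    have := Real.pi_lt_d2
    have := Real.pi_pos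
    nlinarith
  have : 1/4 ≤ ‖riemannZeta s‖ := by
    have := norm_sub_norm_le (1:ℂ) (1 - riemannZeta s)
    rw [norm_one, norm_sub_rev 1 (riemannZeta s)] at this
    simp only [sub_sub_cancel] at this
    linarith
  rw [hz, norm_mul]
  nlinarith

lemma logDeriv_zeta1_bound (RH : RiemannHypothesis) {σ₀ : ℝ} (h₀ : 1/2 < σ₀) (h₂ : σ₀ < 2) :
    ∃ C : ℝ, 0 < C ∧ ∀ s : ℂ, σ₀ ≤ s.re → s.re ≤ 2 →
      ‖deriv riemannZeta₁ s / riemannZeta₁ s‖ ≤ C * Real.log (4 + |s.im|) := by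
  set d : ℝ := (σ₀ - 1/2)/2 with hd
  have hdpos : 0 < d := by rw [hd]; linarith
  refine ⟨(3 * 5 / d) / d, by positivity, ?_⟩
  intro s hs1 hs2
  set t := s.im with ht
  set c : ℂ := 2 + t * I with hc
  have hcre : c.re = 2 := by simp [hc]
  have hcim : c.im = t := by simp [hc]
  have hball : ∀ z ∈ Metric.ball c (3/2), 1/2 < z.re := by
    intro z hz
    rw [Metric.mem_ball, dist_eq_norm] at hz
    have := (Complex.abs_re_le_norm (z - c)).trans_lt hz
    rw [sub_re, hcre, abs_lt] at this
    linarith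
  have hdiff : DifferentiableOn ℂ (fun z => deriv riemannZeta₁ z / riemannZeta₁ z) (Metric.ball c (3/2)) := by
    apply DifferentiableOn.div
    · exact (differentiable_riemannZeta₁.differentiableOn.deriv isOpen_univ).mono (subset_univ _)
    · exact differentiable_riemannZeta₁.differentiableOn
    · intro z hz
      exact zeta1_ne_zero RH (hball z hz)
  obtain ⟨η, hη0, hη⟩ := hdiff.isExactOn_ball.with_val_at c 0
  have hconst : ∀ z ∈ Metric.ball c (3/2), riemannZeta₁ z = riemannZeta₁ c * exp (η z) := by
    intro z hz
    have hcb : c ∈ Metric.ball c (3/2) := Metric.mem_ball_self (by norm_num)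
    have hder : ∀ w ∈ Metric.ball c (3/2),
        HasDerivAt (fun w => riemannZeta₁ w * exp (-η w)) 0 w := by
      intro w hw
      have h1 := (differentiable_riemannZeta₁ w).hasDerivAt
      have h2 := (hη w hw).neg.cexp
      have h3 := h1.mul h2
      refine h3.congr_deriv ?_
      have := zeta1_ne_zero RH (hball w hw)
      field_simp
      ring
    have := (convex_ball c (3/2)).is_const_of_fderivWithin_eq_zero (𝕜 := ℂ)
      (f := fun w => riemannZeta₁ w * exp (-η w))
      (fun w hw => (hder w hw).differentiableAt.differentiableWithinAt) (by
        intro w hw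
        rw [fderivWithin_of_isOpen Metric.isOpen_ball hw]
        have := (hder w hw).hasFDerivAt.fderiv
        rw [this]; ext; simp) hz hcb
    simp only [hη0, neg_zero, exp_zero, mul_one] at this
    rw [← this, mul_assoc, ← exp_add]; simp
  set M : ℝ := Real.log (12 * (4 + |t|)^2) with hM
  have habs : 0 ≤ |t| := abs_nonneg t
  have hMle : M ≤ 5 * Real.log (4 + |t|) := by
    have : 5 * Real.log (4 + |t|) = Real.log ((4+|t|)^5) := by simp [Real.log_pow]
    rw [this, hM]
    apply Real.log_le_log (by positivity)
    have h4 : (4:ℝ)^3 ≤ (4+|t|)^3 := by gcongr; linarith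
    have : (4+|t|)^5 = (4+|t|)^3 * (4+|t|)^2 := by ring
    rw [this]; gcongr; linarith
  have hMpos : 0 < M := by
    apply Real.log_pos; nlinarith
  have hre : ∀ z ∈ Metric.ball c (3/2), (η z).re ≤ M := by
    intro z hz
    have h1 := zeta1_norm_le (hball z hz).le
    have hzn : ‖z‖ ≤ 4 + |t| := by
      rw [Metric.mem_ball, dist_eq_norm] at hz
      have : ‖c‖ ≤ 2 + |t| := by
        rw [hc]; refine (norm_add_le _ _).trans ?_; simp
      have h3 := norm_add_le (z - c) c
      rw [sub_add_cancel] at h3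
      linarith
    have hzn1 : ‖z - 1‖ ≤ 4 + |t| := by
      rw [Metric.mem_ball, dist_eq_norm] at hz
      have : ‖c - 1‖ ≤ 1 + |t| := by
        rw [hc, show (2 + t * I - 1 : ℂ) = 1 + t * I by ring]
        refine (norm_add_le _ _).trans ?_; simp
      have h3 := norm_add_le (z - c) (c-1)
      rw [show z - c + (c-1) = z - 1 by ring] at h3
      linarith
    have h2 : ‖riemannZeta₁ z‖ ≤ 3 * (4 + |t|)^2 := by
      have : ‖z‖ * ‖z - 1‖ ≤ (4+|t|) * (4 + |t|) := by gcongr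
      nlinarith
    rw [hconst z hz, norm_mul, norm_exp] at h2
    have h3 := zeta1_center t
    have h4 : Real.exp (η z).re ≤ 12 * (4 + |t|)^2 := by
      have := Real.exp_pos (η z).re
      nlinarith
    rw [hM, Real.le_log_iff_exp_le (by positivity)]
    exact h4
  have hBC : ∀ z ∈ Metric.ball c (3/2), ‖η z‖ ≤ 2 * M * ‖z - c‖ / (3/2 - ‖z - c‖) := by
    intro z hz
    have h := borelCaratheodory_zero (f := fun w => η (w + c)) (M := M) (R := 3/2) (z := z - c) hMpos
      (by
        intro w hw
        have hw' : w + c ∈ Metric.ball c (3/2) := by simpa [dist_eq_norm] using hw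
        exact ((hη _ hw').comp_add_const w c).differentiableAt.differentiableWithinAt)
      (by
        intro w hw
        have hw' : w + c ∈ Metric.ball c (3/2) := by simpa [dist_eq_norm] using hw
        exact hre _ hw') (by norm_num) (by simpa [dist_eq_norm] using hz) (by simpa using hη0)
    simpa using h
  have hsc : ‖s - c‖ ≤ 2 - σ₀ := by
    have : s - c = ((s.re - 2 : ℝ) : ℂ) := by
      apply Complex.ext <;> simp [hc, ht]
    rw [this, Complex.norm_real, Real.norm_eq_abs, abs_le]; constructor <;> linarith
  have hsub : ∀ z, ‖z - s‖ ≤ d → ‖z - c‖ ≤ 3/2 - d := by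
    intro z hz
    have h3 := norm_add_le (z - s) (s-c)
    rw [show z - s + (s-c) = z - c by ring] at h3
    rw [hd] at *
    linarith
  have hsb : s ∈ Metric.ball c (3/2) := by
    rw [Metric.mem_ball, dist_eq_norm]; linarith
  have hCau := Complex.norm_deriv_le_of_forall_mem_sphere_norm_le (f := η) (c := s) (R := d) (C := 3 * M / d)
    hdpos (by
      apply DifferentiableOn.diffContOnCl
      intro z hz
      rw [closure_ball _ hdpos.ne', Metric.mem_closedBall, dist_eq_norm] at hz
      have := hsub z hz
      exact (hη z (by rw [Metric.mem_ball, dist_eq_norm]; linarith)).differentiableAt.differentiableWithinAt)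
    (by
      intro z hz
      rw [mem_sphere_iff_norm] at hz
      have h1 := hsub z hz.le
      refine (hBC z (by rw [Metric.mem_ball, dist_eq_norm]; linarith)).trans ?_
      have : 3 * M = 2 * M * (3/2) := by ring
      rw [this]
      gcongr <;> linarith)
  rw [(hη s hsb).deriv] at hCau
  refine hCau.trans ?_
  have : 3 * 5 / d / d * Real.log (4 + |t|) = 3 * (5 * Real.log (4 + |t|)) / d / d := by ring
  rw [this]
  gcongr

end partA

section partB
open Complex Set MeasureTheory Topology Asymptotics
open Chebyshev

noncomputable def psiErr (v : ℝ) : ℝ := psi v - v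

noncomputable def psiD (x : ℝ) : ℝ := ∫ v in (1:ℝ)..(max x 1), psiErr v

lemma psiErr_meas : Measurable psiErr := by
  unfold psiErr; exact psi_mono.measurable.sub measurable_id

lemma psiErr_bound : ∃ K : ℝ, 0 < K ∧ ∀ v : ℝ, 0 ≤ v → |psiErr v| ≤ K * v := by
  refine ⟨Real.log 4 + 4 + 1, by have := Real.log_nonneg (x := 4) (by norm_num); linarith, ?_⟩
  intro v hv
  unfold psiErr
  have h1 := psi_le_const_mul_self hv
  have h2 := psi_nonneg v
  rw [abs_le]
  have := Real.log_nonneg (x := 4) (by norm_num)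
  constructor <;> nlinarith

lemma psiErr_ii (a b : ℝ) : IntervalIntegrable psiErr volume a b :=
  (psi_mono.intervalIntegrable).sub (continuous_id.intervalIntegrable _ _)

lemma psiD_cont : Continuous psiD := by
  unfold psiD
  have := intervalIntegral.continuous_primitive psiErr_ii 1
  exact this.comp (by fun_prop)

lemma psiD_eq {x : ℝ} (hx : 1 < x) : psiD x = ∫ v in Ioi (1:ℝ), (Iic x).indicator psiErr v := by
  unfold psiD
  rw [max_eq_left hx.le, intervalIntegral.integral_of_le hx.le, setIntegral_indicator measurableSet_Iic]
  rfl

lemma psiD_of_le {x : ℝ} (hx : x ≤ 1) : psiD x = 0 := by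
  unfold psiD; rw [max_eq_right hx]; simp

/-- The double integral kernel. -/
noncomputable def kerD (s : ℂ) (p : ℝ × ℝ) : ℂ :=
  {p : ℝ × ℝ | p.2 ≤ p.1}.indicator (fun p => (p.1 : ℂ) ^ (-s-2) * (psiErr p.2 : ℂ)) p

lemma kerD_meas (s : ℂ) : Measurable (kerD s) := by
  unfold kerD
  refine Measurable.indicator ?_ (measurableSet_le measurable_snd measurable_fst)
  have := psiErr_meas
  fun_prop

lemma kerD_slice (s : ℂ) (v : ℝ) : (fun t => kerD s (t, v)) =
    (Ici v).indicator (fun t => (t : ℂ) ^ (-s-2) * (psiErr v : ℂ)) := by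
  ext t
  unfold kerD
  simp only [indicator, mem_ofPred_eq, mem_Ici]

lemma kerD_slice_int {s : ℂ} (hs : 1 < s.re) {v : ℝ} (hv : 1 < v) :
    IntegrableOn (fun t => kerD s (t, v)) (Ioi 1) := by
  rw [kerD_slice]
  apply Integrable.integrableOn
  rw [integrable_indicator_iff measurableSet_Ici, integrableOn_Ici_iff_integrableOn_Ioi]
  exact (integrableOn_Ioi_cpow_of_lt (by simp; linarith) (by linarith)).mul_const _

lemma kerD_slice_norm {s : ℂ} (hs : 1 < s.re) {v : ℝ} (hv : 1 < v) :
    ∫ t in Ioi (1:ℝ), ‖kerD s (t, v)‖ = v ^ (-s.re - 1) / (s.re + 1) * |psiErr v| := by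
  have : ∀ t, ‖kerD s (t, v)‖ = (Ici v).indicator (fun t => ‖(t : ℂ) ^ (-s-2)‖ * |psiErr v|) t := by
    intro t
    rw [show kerD s (t,v) = (fun t => kerD s (t, v)) t from rfl, kerD_slice, norm_indicator_eq_indicator_norm]
    simp
  simp_rw [this]
  rw [setIntegral_indicator measurableSet_Ici]
  have hset : Ioi (1:ℝ) ∩ Ici v = Ici v := by
    apply inter_eq_right.mpr; intro t ht; exact lt_of_lt_of_le hv ht
  rw [hset, integral_Ici_eq_integral_Ioi, integral_mul_const]
  congr 1
  have : ∫ t in Ioi v, ‖(t : ℂ) ^ (-s-2)‖ = ∫ t in Ioi v, t ^ (-s.re - 2) := by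
    apply setIntegral_congr_fun measurableSet_Ioi
    intro t ht
    simp only
    rw [Complex.norm_cpow_eq_rpow_re_of_pos (lt_trans (by linarith) ht)]
    simp
  rw [this, integral_Ioi_rpow_of_lt (by linarith) (by linarith)]
  rw [show -s.re - 2 + 1 = -(s.re+1) by ring, show -s.re - 1 = -(s.re+1) by ring, neg_div_neg_eq]

lemma kerD_slice_val {s : ℂ} (hs : 1 < s.re) {v : ℝ} (hv : 1 < v) :
    ∫ t in Ioi (1:ℝ), kerD s (t, v) = (v:ℂ) ^ (-(s+1)) / (s + 1) * psiErr v := by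
  rw [kerD_slice, setIntegral_indicator measurableSet_Ici]
  have hset : Ioi (1:ℝ) ∩ Ici v = Ici v := by
    apply inter_eq_right.mpr; intro t ht; exact lt_of_lt_of_le hv ht
  rw [hset, integral_Ici_eq_integral_Ioi, integral_mul_const]
  congr 1
  rw [integral_Ioi_cpow_of_lt (by simp; linarith) (by linarith)]
  rw [show -s - 2 + 1 = -(s+1) by ring, neg_div_neg_eq]

lemma psiErr_rpow_int {σ : ℝ} (hs : 1 < σ) :
    IntegrableOn (fun v => v ^ (-σ - 1) * |psiErr v|) (Ioi 1) := by
  obtain ⟨K, hK, hb⟩ := psiErr_bound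
  have hI : IntegrableOn (fun v : ℝ => K * v ^ (-σ)) (Ioi 1) :=
    (integrableOn_Ioi_rpow_of_lt (by linarith) one_pos).const_mul _
  refine Integrable.mono' hI ?_ ?_
  · have := psiErr_meas
    exact Measurable.aestronglyMeasurable (by fun_prop)
  · refine (ae_restrict_mem measurableSet_Ioi).mono fun v hv => ?_
    have hv0 : (0:ℝ) < v := lt_trans one_pos hv
    have hp := Real.rpow_nonneg hv0.le (-σ-1)
    rw [Real.norm_eq_abs, abs_mul, abs_abs, abs_of_nonneg hp]
    calc _ ≤ v ^ (-σ-1) * (K * v) := by gcongr; exact hb v hv0.le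
      _ = K * v ^ (-σ) := by
        rw [show (-σ) = (-σ-1)+1 by ring, Real.rpow_add_one hv0.ne']; ring_nf

lemma kerD_int {s : ℂ} (hs : 1 < s.re) :
    Integrable (kerD s) ((volume.restrict (Ioi (1:ℝ))).prod (volume.restrict (Ioi (1:ℝ)))) := by
  rw [integrable_prod_iff' (kerD_meas s).aestronglyMeasurable]
  refine ⟨(ae_restrict_mem measurableSet_Ioi).mono fun v hv => kerD_slice_int hs hv, ?_⟩
  have h : IntegrableOn (fun v => (v ^ (-s.re - 1) * |psiErr v|) / (s.re + 1)) (Ioi 1) :=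
    (psiErr_rpow_int hs).div_const _
  refine Integrable.congr h ?_
  refine (ae_restrict_mem measurableSet_Ioi).mono fun v hv => ?_
  simp only
  rw [kerD_slice_norm hs hv]; ring

lemma kerD_left {s : ℂ} {t : ℝ} (ht : 1 < t) :
    ∫ v in Ioi (1:ℝ), kerD s (t, v) = (t:ℂ) ^ (-s-2) * psiD t := by
  rw [psiD_eq ht, ← integral_complex_ofReal, ← integral_const_mul]
  congr 1; ext v
  unfold kerD
  simp only [indicator, mem_ofPred_eq, mem_Iic]
  split_ifs <;> simp

lemma psiD_mellin_int {s : ℂ} (hs : 1 < s.re) :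
    IntegrableOn (fun t : ℝ => (t:ℂ) ^ (-s-2) * (psiD t : ℂ)) (Ioi 1) := by
  refine (kerD_int hs).integral_prod_left.congr ?_
  refine (ae_restrict_mem measurableSet_Ioi).mono fun t ht => ?_
  simp only
  exact kerD_left ht

lemma psiErr_integral {s : ℂ} (hs : 1 < s.re) :
    ∫ v in Ioi (1:ℝ), (psiErr v : ℂ) * (v:ℂ) ^ (-(s+1)) =
      -(deriv riemannZeta₁ s / riemannZeta₁ s + 1) / s := by
  have hs1 : s ≠ 1 := by rintro rfl; simp at hs
  have hs0 : s ≠ 0 := by rintro rfl; simp at hs; linarith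
  have h1 : s - 1 ≠ 0 := sub_ne_zero.mpr hs1
  have hz0 := riemannZeta_ne_zero_of_one_lt_re hs
  have key := LSeries_eq_mul_integral_of_nonneg (fun n => ArithmeticFunction.vonMangoldt n) (r := 1) zero_le_one hs (by
    refine IsBigO.of_bound (Real.log 4 + 4) ?_
    filter_upwards with n
    have h1 := psi_le_const_mul_self (x := n) (by positivity)
    have h2 := psi_nonneg n
    have e : psi n = ∑ k ∈ Finset.Icc 1 n, ArithmeticFunction.vonMangoldt k := by
      unfold psi; rw [Nat.floor_natCast]; rfl
    rw [← e]
    simpa [abs_of_nonneg h2] using h1) (fun n => ArithmeticFunction.vonMangoldt_nonneg)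
  rw [ArithmeticFunction.LSeries_vonMangoldt_eq_deriv_riemannZeta_div hs] at key
  have e0 : ∫ t in Ioi (1 : ℝ), (∑ k ∈ Finset.Icc 1 ⌊t⌋₊, (ArithmeticFunction.vonMangoldt k : ℂ)) * (t:ℂ) ^ (-(s + 1))
      = ∫ t in Ioi (1 : ℝ), ((psiErr t : ℂ) * (t:ℂ) ^ (-(s+1)) + (t:ℂ) ^ (-s)) := by
    apply setIntegral_congr_fun measurableSet_Ioi
    intro t ht
    have ht0 : (0:ℝ) < t := lt_trans one_pos ht
    have htc : (t:ℂ) ≠ 0 := by exact_mod_cast ht0.ne'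
    have e3 : (t:ℂ) ^ (-s) = t * (t:ℂ) ^ (-(s+1)) := by
      rw [show -s = 1 + -(s+1) by ring, cpow_add _ _ htc, cpow_one]
    have e4 : (∑ k ∈ Finset.Icc 1 ⌊t⌋₊, (ArithmeticFunction.vonMangoldt k : ℂ)) = psiErr t + t := by
      unfold psiErr psi
      push_cast
      rw [sub_add_cancel]; rfl
    simp only
    rw [e3, e4]; ring
  have hint1 : IntegrableOn (fun t : ℝ => (t:ℂ) ^ (-s)) (Ioi 1) :=
    integrableOn_Ioi_cpow_of_lt (by simpa using hs) one_pos
  have hint2 : IntegrableOn (fun t : ℝ => (psiErr t : ℂ) * (t:ℂ) ^ (-(s+1))) (Ioi 1) := by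
    refine Integrable.mono' (psiErr_rpow_int hs) ?_ ?_
    · have := psiErr_meas
      exact Measurable.aestronglyMeasurable (by fun_prop)
    · refine (ae_restrict_mem measurableSet_Ioi).mono fun v hv => ?_
      have hv0 : (0:ℝ) < v := lt_trans one_pos hv
      rw [norm_mul, Complex.norm_cpow_eq_rpow_re_of_pos hv0, mul_comm, Complex.norm_real, Real.norm_eq_abs]
      apply le_of_eq; congr 2; simp; ring
  rw [e0, integral_add hint2 hint1, integral_Ioi_cpow_of_lt (by simpa using hs) one_pos] at key
  have hd : deriv riemannZeta₁ s / riemannZeta₁ s = 1/(s-1) + deriv riemannZeta s / riemannZeta s := by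
    have a := deriv_riemannZeta_eq_neg_inv_sub_sq_mul_add hs1
    have b := riemannZeta_eq_inv_sub_mul hs1
    have hz1 : riemannZeta₁ s ≠ 0 := by
      intro h; rw [h, mul_zero] at b; exact hz0 b
    rw [a, b]
    field_simp
    ring
  simp only [ofReal_one, one_cpow] at key
  have h2 : -s + 1 ≠ 0 := by intro h; apply h1; linear_combination -h
  set J := ∫ v in Ioi (1:ℝ), (psiErr v : ℂ) * (v:ℂ) ^ (-(s+1))
  set q := deriv riemannZeta s / riemannZeta s with hq
  rw [neg_div, ← hq] at key
  rw [hd]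
  have key2 : q = -(s * (J + -1/(-s+1))) := by rw [← key]; ring
  rw [key2]
  have h3 : -s + 1 = -(s - 1) := by ring
  rw [h3]
  field_simp
  ring

/-- The Mellin transform of `psiD`. -/
noncomputable def HH (s : ℂ) : ℂ :=
  -(deriv riemannZeta₁ s / riemannZeta₁ s + 1) / (s * (s + 1))

lemma psiD_integral {s : ℂ} (hs : 1 < s.re) :
    ∫ t in Ioi (1:ℝ), (t:ℂ) ^ (-s-2) * (psiD t : ℂ) = HH s := by
  have h1 : ∫ t in Ioi (1:ℝ), (t:ℂ) ^ (-s-2) * (psiD t : ℂ) =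
      ∫ t in Ioi (1:ℝ), ∫ v in Ioi (1:ℝ), kerD s (t, v) := by
    apply setIntegral_congr_fun measurableSet_Ioi
    intro t ht
    exact (kerD_left ht).symm
  have h2 : ∫ v in Ioi (1:ℝ), ∫ t in Ioi (1:ℝ), kerD s (t, v) =
      ∫ v in Ioi (1:ℝ), (psiErr v : ℂ) * (v:ℂ) ^ (-(s+1)) / (s + 1) := by
    apply setIntegral_congr_fun measurableSet_Ioi
    intro v hv
    simp only
    rw [kerD_slice_val hs hv]; ring
  rw [h1, integral_integral_swap (f := fun t v => kerD s (t, v)) (kerD_int hs), h2, integral_div, psiErr_integral hs, HH]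
  rw [div_div]

noncomputable def psiF (y : ℝ) : ℂ := (psiD y⁻¹ : ℂ)

lemma psiD_indicator (s : ℂ) (t : ℝ) : (t:ℂ) ^ (-(s+1) - 1) • (psiD t : ℂ) =
    (Ioi (1:ℝ)).indicator (fun t : ℝ => (t:ℂ) ^ (-s-2) * (psiD t : ℂ)) t := by
  by_cases h : t ∈ Ioi (1:ℝ)
  · rw [indicator_of_mem h, smul_eq_mul]; congr 2; ring
  · rw [indicator_of_notMem h, psiD_of_le (by simpa using h)]; simp

lemma psiF_mellin {s : ℂ} (hs : 1 < s.re) : mellin psiF (s+1) = HH s := by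
  have h0 : mellin psiF (s+1) = mellin (fun t => (psiD t : ℂ)) (-(s+1)) :=
    mellin_comp_inv (fun t => (psiD t : ℂ)) (s+1)
  rw [h0, mellin]
  simp_rw [psiD_indicator]
  rw [setIntegral_indicator measurableSet_Ioi, ← psiD_integral hs]
  congr 2
  ext x; simp only [mem_inter_iff, mem_Ioi]; constructor
  · exact fun h => h.2
  · exact fun h => ⟨by linarith, h⟩

lemma psiF_conv {s : ℂ} (hs : 1 < s.re) : MellinConvergent psiF (s+1) := by
  have h : MellinConvergent (fun t => (psiD t : ℂ)) (-(s+1)) := by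
    unfold MellinConvergent
    simp_rw [psiD_indicator]
    apply Integrable.integrableOn
    rw [integrable_indicator_iff measurableSet_Ioi]
    exact psiD_mellin_int hs
  have h2 := (MellinConvergent.comp_rpow (f := fun t => (psiD t : ℂ)) (s := s+1) (a := -1) (by norm_num)).2 (by
    convert h using 1; push_cast; rw [div_neg, div_one])
  unfold psiF
  refine h2.congr_fun ?_ measurableSet_Ioi
  intro t ht
  simp only [Real.rpow_neg_one]

end partB

section partB2
open Complex Set MeasureTheory Topology Asymptotics
open Chebyshev

lemma HH_bound (RH : RiemannHypothesis) {σ₀ ε : ℝ} (h₀ : 1/2 < σ₀) (h₂ : σ₀ < 2) (hε : 0 < ε) :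
    ∃ C : ℝ, 0 < C ∧ ∀ s : ℂ, σ₀ ≤ s.re → s.re ≤ 2 → ‖HH s‖ ≤ C * (1 + |s.im|) ^ (ε - 2) := by
  obtain ⟨C, hC, hb⟩ := logDeriv_zeta1_bound RH h₀ h₂
  refine ⟨(C + 1) * (4 ^ ε / ε) * 8, by positivity, ?_⟩
  intro s h1 h2
  set u := |s.im| with hu
  have hu0 : 0 ≤ u := abs_nonneg _
  have hw : 0 < 1 + u := by linarith
  have hlog1 : 1 ≤ Real.log (4 + u) := by
    rw [Real.le_log_iff_exp_le (by linarith)]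
    have := Real.exp_one_lt_d9
    linarith
  have hlog2 : Real.log (4 + u) ≤ 4 ^ ε / ε * (1 + u) ^ ε := by
    calc Real.log (4 + u) ≤ Real.log (4 * (1 + u)) := by
          apply Real.log_le_log (by linarith); linarith
      _ ≤ (4 * (1+u)) ^ ε / ε := Real.log_le_rpow_div (by positivity) hε
      _ = _ := by rw [Real.mul_rpow (by norm_num) hw.le]; ring
  have hn : ‖deriv riemannZeta₁ s / riemannZeta₁ s + 1‖ ≤ (C+1) * (4 ^ ε / ε * (1 + u) ^ ε) := by
    calc _ ≤ ‖deriv riemannZeta₁ s / riemannZeta₁ s‖ + 1 := by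
          refine (norm_add_le _ _).trans ?_; simp
      _ ≤ C * Real.log (4 + u) + Real.log (4 + u) := add_le_add (hb s h1 h2) hlog1
      _ = (C+1) * Real.log (4 + u) := by ring
      _ ≤ _ := by gcongr
  have hs1 : (1 + u) / 4 ≤ ‖s‖ := by
    have a := abs_re_le_norm s
    have b := abs_im_le_norm s
    rw [abs_of_nonneg (by linarith : 0 ≤ s.re)] at a
    linarith
  have hs2 : (1 + u) / 2 ≤ ‖s + 1‖ := by
    have a := abs_re_le_norm (s+1)
    have b := abs_im_le_norm (s+1)
    simp only [add_re, one_re, add_im, one_im, add_zero] at a b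
    rw [abs_of_nonneg (by linarith : 0 ≤ s.re + 1)] at a
    linarith
  unfold HH
  rw [norm_div, norm_neg, norm_mul]
  calc _ ≤ ((C+1) * (4 ^ ε / ε * (1 + u) ^ ε)) / ((1+u)/4 * ((1+u)/2)) := by gcongr
    _ = (C + 1) * (4 ^ ε / ε) * 8 * ((1+u)^ε / (1+u)^(2:ℝ)) := by
      rw [Real.rpow_two]; field_simp; norm_num
    _ = _ := by rw [← Real.rpow_sub hw]

lemma HH_diff (RH : RiemannHypothesis) {s : ℂ} (hs : 1/2 < s.re) : DifferentiableAt ℂ HH s := by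
  have h1 : DifferentiableAt ℂ riemannZeta₁ s := differentiable_riemannZeta₁ s
  have h2 : DifferentiableAt ℂ (deriv riemannZeta₁) s :=
    (differentiable_riemannZeta₁.contDiff (n := 2)).differentiable_deriv_two s
  have h3 : s ≠ 0 := by rintro rfl; simp at hs; linarith
  have h4 : s + 1 ≠ 0 := by
    intro h
    have := congrArg re h
    simp at this; linarith
  unfold HH
  refine DifferentiableAt.div ?_ (by fun_prop) (mul_ne_zero h3 h4)
  exact ((h2.div h1 (zeta1_ne_zero RH hs)).add_const _).neg

lemma int_w {r : ℝ} (hr : r < -1) : Integrable (fun t : ℝ => (1 + |t|) ^ r) := by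
  have := integrable_one_add_norm (E := ℝ) (μ := volume) (r := -r) (by simp; linarith)
  simpa using this

/-- The integrand on the vertical line of real part `σ`. -/
noncomputable def vI (x σ t : ℝ) : ℂ := (x : ℂ) ^ ((σ : ℂ) + t * I + 1) * HH (σ + t * I)

lemma HH_line_cont (RH : RiemannHypothesis) {σ : ℝ} (hs : 1/2 < σ) :
    Continuous (fun t : ℝ => HH (σ + t * I)) := by
  rw [continuous_iff_continuousAt]
  intro t
  have h := (HH_diff RH (s := σ + t * I) (by simpa using hs)).continuousAt
  exact ContinuousAt.comp (f := fun t : ℝ => (σ : ℂ) + t * I) h (by fun_prop)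

lemma vI_cont (RH : RiemannHypothesis) {x σ : ℝ} (hx : 0 < x) (hs : 1/2 < σ) :
    Continuous (vI x σ) := by
  unfold vI
  refine Continuous.mul ?_ (HH_line_cont RH hs)
  refine Continuous.const_cpow (by fun_prop) (Or.inl ?_)
  exact_mod_cast hx.ne'

lemma HH_line_int (RH : RiemannHypothesis) {σ : ℝ} (hs : 1/2 < σ) (hs2 : σ ≤ 2) :
    Integrable (fun t : ℝ => HH (σ + t * I)) := by
  obtain ⟨C, hC, hb⟩ := HH_bound RH (σ₀ := min σ 1) (ε := 1/2) (lt_min hs (by norm_num)) (by simp) (by norm_num)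
  refine Integrable.mono' ((int_w (r := 1/2 - 2) (by norm_num)).const_mul C)
    (HH_line_cont RH hs).aestronglyMeasurable ?_
  filter_upwards with t
  have := hb (σ + t * I) (by simp) (by simpa using hs2)
  simpa using this

lemma vI_int (RH : RiemannHypothesis) {x σ : ℝ} (hx : 0 < x) (hs : 1/2 < σ) (hs2 : σ ≤ 2) :
    Integrable (vI x σ) := by
  refine Integrable.mono' ((HH_line_int RH hs hs2).norm.const_mul (x ^ (σ + 1)))
    (vI_cont RH hx hs).aestronglyMeasurable ?_
  filter_upwards with t
  unfold vI
  rw [norm_mul, Complex.norm_cpow_eq_rpow_re_of_pos hx]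
  simp

lemma psiD_inv (RH : RiemannHypothesis) {x : ℝ} (hx : 0 < x) :
    (psiD x : ℂ) = (1 / (2 * Real.pi)) • ∫ t : ℝ, vI x 2 t := by
  have e : ∀ t : ℝ, (((3:ℝ):ℂ) + t * I) = (((2:ℝ):ℂ) + t * I) + 1 := by
    intro t; push_cast; ring
  have hm : ∀ t : ℝ, mellin psiF (((3:ℝ):ℂ) + t * I) = HH (((2:ℝ):ℂ) + t * I) := by
    intro t
    rw [e, psiF_mellin (by simp)]
  have h := mellinInv_mellin_eq 3 psiF (x := x⁻¹) (by positivity) (by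
    have := psiF_conv (s := 2) (by simp)
    convert this using 1
    push_cast; norm_num) (by
    unfold VerticalIntegrable
    simp_rw [hm]
    exact HH_line_int RH (by norm_num) le_rfl) (by
    unfold psiF
    have h1 : ContinuousAt (fun y : ℝ => y⁻¹) x⁻¹ := continuousAt_inv₀ (by positivity)
    exact continuous_ofReal.continuousAt.comp (psiD_cont.continuousAt.comp h1))
  unfold mellinInv psiF at h
  rw [inv_inv] at h
  rw [← h]
  congr 2
  ext t
  have := hm t
  unfold psiF at this
  rw [this]
  unfold vI
  rw [smul_eq_mul]
  congr 1
  rw [← e, Complex.ofReal_inv, Complex.inv_cpow _ _ (by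
    rw [Complex.arg_ofReal_of_nonneg hx.le]; exact Real.pi_pos.ne), ← Complex.cpow_neg, neg_neg]

lemma vI_shift (RH : RiemannHypothesis) {x σ : ℝ} (hx : 1 ≤ x) (hs : 1/2 < σ) (hs2 : σ < 2) :
    ∫ t : ℝ, vI x σ t = ∫ t : ℝ, vI x 2 t := by
  have hx0 : 0 < x := by linarith
  obtain ⟨C, hC, hb⟩ := HH_bound RH (σ₀ := σ) (ε := 1) hs hs2 one_pos
  set f : ℂ → ℂ := fun s => (x : ℂ) ^ (s + 1) * HH s with hf
  have hdiff : ∀ s : ℂ, 1/2 < s.re → DifferentiableAt ℂ f s := by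
    intro s h
    refine DifferentiableAt.mul ?_ (HH_diff RH h)
    refine DifferentiableAt.const_cpow (by fun_prop) (Or.inl ?_)
    exact_mod_cast hx0.ne'
  have hfb : ∀ s : ℂ, σ ≤ s.re → s.re ≤ 2 → ‖f s‖ ≤ x ^ (3:ℝ) * (C * (1 + |s.im|) ^ (-1:ℝ)) := by
    intro s h1 h2
    rw [hf]; simp only
    rw [norm_mul, Complex.norm_cpow_eq_rpow_re_of_pos hx0]
    gcongr
    · simp; linarith
    · have := hb s h1 h2
      rwa [show (1:ℝ) - 2 = -1 by norm_num] at this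
  have hv : ∀ τ : ℝ, 1/2 < τ → τ ≤ 2 → Tendsto (fun T : ℝ => ∫ y in (-T)..T, f (τ + y * I)) atTop
      (𝓝 (∫ t : ℝ, vI x τ t)) := by
    intro τ h1 h2
    exact intervalIntegral_tendsto_integral (vI_int RH hx0 h1 h2) tendsto_neg_atTop_atBot tendsto_id
  have hlim0 : Tendsto (fun T : ℝ => x ^ (3:ℝ) * (C * (1 + T) ^ (-1:ℝ)) * |2 - σ|) atTop (𝓝 0) := by
    have h1 : Tendsto (fun T : ℝ => (1 + T) ^ (-1:ℝ)) atTop (𝓝 0) :=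
      (tendsto_rpow_neg_atTop one_pos).comp (tendsto_atTop_add_const_left _ _ tendsto_id)
    have := ((h1.const_mul C).const_mul (x ^ (3:ℝ))).mul_const |2 - σ|
    simpa using this
  have hh : ∀ c : ℝ, |c| = 1 → Tendsto (fun T : ℝ => ∫ y in σ..2, f (y + ((c * T : ℝ) : ℂ) * I)) atTop (𝓝 0) := by
    intro c hc
    refine squeeze_zero_norm' ?_ hlim0
    filter_upwards [eventually_ge_atTop 0] with T hT
    refine intervalIntegral.norm_integral_le_of_norm_le_const ?_
    intro y hy
    rw [uIoc_of_le hs2.le] at hy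
    have := hfb (y + ((c * T : ℝ) : ℂ) * I) (by simpa using hy.1.le) (by simpa using hy.2)
    simpa [abs_mul, hc, abs_of_nonneg hT] using this
  have hrect : ∀ T : ℝ, (∫ y in σ..2, f (y + (((-1) * T : ℝ) : ℂ) * I)) -
      (∫ y in σ..2, f (y + ((1 * T : ℝ) : ℂ) * I)) + I • (∫ y in (-T)..T, f (((2:ℝ):ℂ) + y * I))
      - I • (∫ y in (-T)..T, f (σ + y * I)) = 0 := by
    intro T
    have := Complex.integral_boundary_rect_eq_zero_of_differentiableOn f (σ + ((-T : ℝ) : ℂ) * I)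
      (((2:ℝ):ℂ) + (T : ℂ) * I) (by
        intro s hs'
        apply DifferentiableAt.differentiableWithinAt
        apply hdiff
        have := hs'.1
        simp [uIcc_of_le hs2.le] at this
        linarith [this.1])
    simpa using this
  have hL := (((hh (-1) (by simp)).sub (hh 1 (by simp))).add ((hv 2 (by norm_num) le_rfl).const_smul I)).sub
    ((hv σ hs hs2.le).const_smul I)
  have h0 := tendsto_nhds_unique (hL.congr hrect) tendsto_const_nhds
  simp only [sub_zero, zero_add, smul_eq_mul] at h0
  have := mul_left_cancel₀ I_ne_zero (sub_eq_zero.mp h0)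
  exact this.symm

lemma psiD_line (RH : RiemannHypothesis) {x σ : ℝ} (hx : 1 ≤ x) (hs : 1/2 < σ) (hs2 : σ < 2) :
    (psiD x : ℂ) = (1 / (2 * Real.pi)) • ∫ t : ℝ, vI x σ t := by
  rw [vI_shift RH hx hs hs2, psiD_inv RH (by linarith)]

end partB2

section partB3
open Complex Set MeasureTheory Topology Asymptotics
open Chebyshev

lemma cpow_diff_bound {x σ t p : ℝ} (hx : 1 ≤ x) (h0 : 0 < σ) (h2 : σ < 2) (hp : 0 ≤ p) (hp1 : p ≤ 1) :
    ‖((x + 1 : ℝ) : ℂ) ^ ((σ : ℂ) + t * I + 1) - (x : ℂ) ^ ((σ : ℂ) + t * I + 1)‖ ≤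
      3 * (x + 1) ^ σ * ((x + 1) ^ p * (1 + |t|) ^ (1 - p)) := by
  set w : ℂ := (σ : ℂ) + t * I + 1 with hw
  have hx0 : 0 < x := by linarith
  have hwre : w.re = σ + 1 := by simp [hw]
  have ha : ‖((x + 1 : ℝ) : ℂ) ^ w - (x : ℂ) ^ w‖ ≤ 3 * (x + 1) ^ σ * (x + 1) := by
    refine (norm_sub_le _ _).trans ?_
    rw [Complex.norm_cpow_eq_rpow_re_of_pos hx0, Complex.norm_cpow_eq_rpow_re_of_pos (by linarith), hwre]
    have e1 : x ^ (σ + 1) ≤ (x + 1) ^ (σ + 1) :=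
      Real.rpow_le_rpow hx0.le (by linarith) (by linarith)
    have e2 : (x + 1) ^ (σ + 1) = (x+1)^σ * (x+1) := Real.rpow_add_one (by linarith) _
    have e3 : 0 ≤ (x+1)^σ * (x+1) := by positivity
    linarith
  have hwn : ‖w‖ ≤ 3 * (1 + |t|) := by
    have : w = ((σ + 1 : ℝ) : ℂ) + t * I := by rw [hw]; push_cast; ring
    rw [this]
    refine (norm_add_le _ _).trans ?_
    simp only [norm_mul, norm_I, Complex.norm_real, Real.norm_eq_abs, mul_one]
    rw [abs_of_nonneg (by linarith : 0 ≤ σ + 1)]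
    have := abs_nonneg t
    linarith
  have hbb : ‖((x + 1 : ℝ) : ℂ) ^ w - (x : ℂ) ^ w‖ ≤ 3 * (x + 1) ^ σ * (1 + |t|) := by
    have hd : ∀ u ∈ Icc x (x+1), HasDerivWithinAt (fun u : ℝ => (u : ℂ) ^ w) (w * (u:ℂ) ^ (w - 1)) (Icc x (x+1)) u := by
      intro u hu
      have hu0 : 0 < u := lt_of_lt_of_le hx0 hu.1
      have := (hasDerivAt_ofReal_cpow_const' (x := u) hu0.ne' (r := w - 1) (by
        intro h
        have h' : w = 0 := by linear_combination h
        have := congrArg re h'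
        rw [hwre] at this; simp at this; linarith))
      have hw0 : w ≠ 0 := by
        intro h'
        have := congrArg re h'
        rw [hwre] at this; simp at this; linarith
      have h3 := this.const_mul w
      simp only [sub_add_cancel] at h3
      refine (HasDerivAt.hasDerivWithinAt ?_)
      refine h3.congr_of_eventuallyEq ?_
      filter_upwards with y
      field_simp
    have hbd : ∀ u ∈ Icc x (x+1), ‖w * (u:ℂ) ^ (w - 1)‖ ≤ 3 * (x + 1) ^ σ * (1 + |t|) := by
      intro u hu
      have hu0 : 0 < u := lt_of_lt_of_le hx0 hu.1
      rw [norm_mul, Complex.norm_cpow_eq_rpow_re_of_pos hu0]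
      have e : (w - 1).re = σ := by simp [hw]
      rw [e]
      calc _ ≤ 3 * (1 + |t|) * (x+1) ^ σ := by
            gcongr; exact hu.2
        _ = _ := by ring
    have := (convex_Icc x (x+1)).norm_image_sub_le_of_norm_hasDerivWithin_le hd hbd
      (left_mem_Icc.mpr (by linarith)) (right_mem_Icc.mpr (by linarith))
    simpa using this
  have hx1 : 0 < x + 1 := by linarith
  have ht1 : 0 < 1 + |t| := by positivity
  rcases le_total (x+1) (1 + |t|) with h | h
  · refine ha.trans ?_
    gcongr
    calc x + 1 = (x+1)^p * (x+1)^(1-p) := by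
          rw [← Real.rpow_add hx1]; simp
      _ ≤ _ := by gcongr
  · refine hbb.trans ?_
    gcongr
    calc 1 + |t| = (1+|t|)^p * (1+|t|)^(1-p) := by
          rw [← Real.rpow_add ht1]; simp
      _ ≤ _ := by gcongr

lemma psiD_diff (RH : RiemannHypothesis) {β : ℝ} (h1 : 1/2 < β) (h2 : β < 1) :
    ∃ C : ℝ, 0 < C ∧ ∀ x : ℝ, 1 ≤ x → |psiD (x+1) - psiD x| ≤ C * (x+1) ^ β := by
  set σ := (1/2 + β) / 2 with hσ
  set ε := (β - 1/2) / 4 with hε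
  have hσ1 : 1/2 < σ := by rw [hσ]; linarith
  have hσ2 : σ < 2 := by rw [hσ]; linarith
  have hε0 : 0 < ε := by rw [hε]; linarith
  obtain ⟨C, hC, hb⟩ := HH_bound RH hσ1 hσ2 hε0
  set J := ∫ t : ℝ, (1 + |t|) ^ (-1 - ε) with hJ
  have hJ0 : 0 ≤ J := integral_nonneg fun t => by positivity
  refine ⟨(1 / (2 * Real.pi)) * (3 * C * J) + 1, by positivity, ?_⟩
  intro x hx
  have hx0 : 0 < x := by linarith
  have hx1 : 0 < x + 1 := by linarith
  have e : ((psiD (x+1) - psiD x : ℝ) : ℂ) = (1 / (2 * Real.pi)) • ∫ t : ℝ, (vI (x+1) σ t - vI x σ t) := by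
    rw [integral_sub (vI_int RH hx1 hσ1 hσ2.le) (vI_int RH hx0 hσ1 hσ2.le), smul_sub,
      ← psiD_line RH hx hσ1 hσ2, ← psiD_line RH (by linarith) hσ1 hσ2]
    push_cast; rfl
  have hbd : ‖∫ t : ℝ, (vI (x+1) σ t - vI x σ t)‖ ≤ ∫ t : ℝ, (3 * C * (x+1)^β) * (1 + |t|) ^ (-1 - ε) := by
    refine norm_integral_le_of_norm_le ((int_w (by linarith)).const_mul _) ?_
    filter_upwards with t
    unfold vI
    rw [← sub_mul, norm_mul]
    have ht1 : 0 < 1 + |t| := by positivity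
    have a := cpow_diff_bound (t := t) hx (by linarith : 0 < σ) hσ2 (p := 2 * ε) (by linarith) (by rw [hε]; linarith)
    have b := hb (σ + t * I) (by simp) (by simpa using hσ2.le)
    simp only [add_im, ofReal_im, mul_im, ofReal_re, I_im, mul_one, I_re, mul_zero, add_zero, zero_add] at b
    calc _ ≤ (3 * (x + 1) ^ σ * ((x + 1) ^ (2*ε) * (1 + |t|) ^ (1 - 2*ε))) * (C * (1 + |t|) ^ (ε - 2)) := by
          gcongr
      _ = 3 * C * ((x+1)^σ * (x+1)^(2*ε)) * ((1 + |t|) ^ (1 - 2*ε) * (1 + |t|) ^ (ε - 2)) := by ring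
      _ = _ := by
        rw [← Real.rpow_add hx1, ← Real.rpow_add ht1]
        congr 2
        · congr 1; rw [hσ, hε]; ring
        · ring
  rw [integral_const_mul] at hbd
  have : |psiD (x+1) - psiD x| = ‖((psiD (x+1) - psiD x : ℝ) : ℂ)‖ := by
    rw [Complex.norm_real, Real.norm_eq_abs]
  rw [this, e, norm_smul, Real.norm_of_nonneg (by positivity)]
  calc _ ≤ 1 / (2 * Real.pi) * (3 * C * (x + 1) ^ β * J) := by gcongr
    _ = (1 / (2 * Real.pi)) * (3 * C * J) * (x+1)^β := by ring
    _ ≤ _ := by gcongr; linarith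

lemma psiD_diff_eq {x : ℝ} (hx : 1 ≤ x) : psiD (x+1) - psiD x = ∫ v in x..(x+1), psiErr v := by
  unfold psiD
  rw [max_eq_left hx, max_eq_left (by linarith), intervalIntegral.integral_interval_sub_left (psiErr_ii _ _) (psiErr_ii _ _)]

lemma psiErr_upper {x : ℝ} (hx : 1 ≤ x) : psiErr x - 1 ≤ psiD (x+1) - psiD x := by
  rw [psiD_diff_eq hx]
  have : ∫ v in x..(x+1), (psiErr x - 1) = psiErr x - 1 := by simp
  rw [← this]
  apply intervalIntegral.integral_mono_on (by linarith) (by simp) (psiErr_ii _ _)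
  intro v hv
  have := psi_mono hv.1
  unfold psiErr
  linarith [hv.2]

lemma psiErr_lower {x : ℝ} (hx : 1 ≤ x) : psiD (x+1) - psiD x ≤ psiErr (x+1) + 1 := by
  rw [psiD_diff_eq hx]
  have : ∫ v in x..(x+1), (psiErr (x+1) + 1) = psiErr (x+1) + 1 := by simp
  rw [← this]
  apply intervalIntegral.integral_mono_on (by linarith) (psiErr_ii _ _) (by simp)
  intro v hv
  have := psi_mono hv.2
  unfold psiErr
  linarith [hv.1]

lemma psi_bound (RH : RiemannHypothesis) {β : ℝ} (h1 : 1/2 < β) (h2 : β < 1) :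
    ∃ C : ℝ, 0 < C ∧ ∀ x : ℝ, 1 ≤ x → |psiErr x| ≤ C * x ^ β := by
  obtain ⟨C, hC, hb⟩ := psiD_diff RH h1 h2
  refine ⟨2 * C + 2, by positivity, ?_⟩
  intro x hx
  have hx0 : 0 < x := by linarith
  have hone : 1 ≤ x ^ β := Real.one_le_rpow hx (by linarith)
  rw [abs_le]
  constructor
  · rcases le_total x 2 with h | h
    · have := psi_nonneg x
      unfold psiErr
      have : 0 ≤ 2 * C * x ^ β := by positivity
      nlinarith
    · have a := psiErr_lower (x := x - 1) (by linarith)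
      have b := (abs_le.mp (hb (x-1) (by linarith))).1
      rw [sub_add_cancel] at a b
      have : 0 ≤ C * x ^ β := by positivity
      nlinarith
  · have a := psiErr_upper hx
    have b := (abs_le.mp (hb x hx)).2
    have c : (x+1)^β ≤ 2 * x ^ β := by
      calc (x+1)^β ≤ (2 * x) ^ β := Real.rpow_le_rpow (by linarith) (by linarith) (by linarith)
        _ = 2 ^ β * x ^ β := Real.mul_rpow (by norm_num) hx0.le
        _ ≤ 2 ^ (1:ℝ) * x ^ β := by gcongr; norm_num
        _ = _ := by rw [Real.rpow_one]
    have : C * (x+1)^β ≤ C * (2 * x ^ β) := by gcongr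
    nlinarith

/-- The remainder in the prime number theorem. -/
noncomputable def thR (u : ℝ) : ℝ := theta u - u

lemma theta_bound (RH : RiemannHypothesis) {β : ℝ} (h1 : 1/2 < β) (h2 : β < 1) :
    ∃ C : ℝ, 0 < C ∧ ∀ x : ℝ, 1 ≤ x → |thR x| ≤ C * x ^ β := by
  obtain ⟨C, hC, hb⟩ := psi_bound RH h1 h2
  obtain ⟨D, hD⟩ := psi_sub_theta_le_mul_sqrt
  refine ⟨C + |D|, by positivity, ?_⟩
  intro x hx
  have hx0 : 0 < x := by linarith
  have a := hb x hx
  have b := hD x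
  have c := theta_le_psi x
  have d : √x ≤ x ^ β := by
    rw [Real.sqrt_eq_rpow]
    exact Real.rpow_le_rpow_of_exponent_le hx h1.le
  have e : D * √x ≤ |D| * x ^ β := by
    refine (mul_le_mul_of_nonneg_right (le_abs_self D) (Real.sqrt_nonneg x)).trans ?_
    gcongr
  have f : |thR x - psiErr x| ≤ |D| * x ^ β := by
    unfold thR psiErr
    rw [abs_le]; constructor <;> linarith
  have g : |thR x| ≤ |thR x - psiErr x| + |psiErr x| := by
    have := abs_add_le (thR x - psiErr x) (psiErr x)
    simpa using this
  linarith

end partB3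

section partC
open Complex Set MeasureTheory Topology Asymptotics

/-- The entire part of `-E₁`. -/
noncomputable def eS (z : ℂ) : ℂ :=
  ∑' k : ℕ, (-z) ^ (k + 1) / (((k + 1) * Nat.factorial (k + 1) : ℕ) : ℂ)

lemma E1_eq (z : ℂ) : expIntegralE1 z = -(Real.eulerMascheroniConstant : ℂ) - Complex.log z - eS z := rfl

lemma eS_zero : eS 0 = 0 := by
  unfold eS; simp

lemma eS_deriv {z : ℂ} (hz : z ≠ 0) : HasDerivAt eS ((exp (-z) - 1) / z) z := by
  set R := ‖z‖ + 1 with hR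
  have hR0 : 0 ≤ R := by positivity
  have h := hasDerivAt_tsum_of_isPreconnected (𝕜 := ℂ) (t := Metric.ball (0:ℂ) R) (y₀ := 0) (y := z)
    (g := fun (k : ℕ) (z : ℂ) => (-z) ^ (k + 1) / (((k + 1) * Nat.factorial (k + 1) : ℕ) : ℂ))
    (g' := fun (k : ℕ) (z : ℂ) => -((-z) ^ k / (Nat.factorial (k + 1) : ℂ)))
    (u := fun k : ℕ => R ^ k / (Nat.factorial k : ℝ))
    (Real.summable_pow_div_factorial R) Metric.isOpen_ball (convex_ball _ _).isPreconnected
    (by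
      intro n y _
      have h1 : HasDerivAt (fun z : ℂ => (-z) ^ (n+1)) (((n + 1 : ℕ) : ℂ) * (-y) ^ n * (-1)) y := by
        have := (hasDerivAt_neg y).fun_pow (n+1)
        simpa using this
      refine (h1.div_const _).congr_deriv ?_
      have a : ((n + 1 : ℕ) : ℂ) ≠ 0 := by exact_mod_cast n.succ_ne_zero
      have b : ((n + 1).factorial : ℂ) ≠ 0 := by exact_mod_cast (n+1).factorial_ne_zero
      rw [Nat.cast_mul]
      field_simp)
    (by
      intro n y hy
      have hy' : ‖y‖ ≤ R := by simpa using (mem_ball_zero_iff.mp hy).le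
      rw [norm_neg, norm_div, norm_pow, norm_neg, Complex.norm_natCast]
      have : (n.factorial : ℝ) ≤ ((n+1).factorial : ℝ) := by
        exact_mod_cast Nat.factorial_le (Nat.le_succ n)
      have : (0:ℝ) < n.factorial := by exact_mod_cast n.factorial_pos
      gcongr)
    (by simp [hR]; positivity) (by simp [summable_zero]) (by simp [hR])
  refine h.congr_deriv ?_
  rw [tsum_neg]
  have hexp : HasSum (fun k : ℕ => (-z) ^ k / (k.factorial : ℂ)) (exp (-z)) := by
    have := NormedSpace.expSeries_div_hasSum_exp (𝔸 := ℂ) (-z)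
    rwa [← Complex.exp_eq_exp_ℂ] at this
  have h2 := (hasSum_nat_add_iff' 1).mpr hexp
  simp only [Finset.range_one, Finset.sum_singleton, pow_zero, Nat.factorial_zero, Nat.cast_one, div_one] at h2
  have h3 := h2.div_const (-z)
  have h4 : ∀ k : ℕ, (-z) ^ (k + 1) / ((k+1).factorial : ℂ) / (-z) = (-z)^k / ((k+1).factorial : ℂ) := by
    intro k
    have : -z ≠ 0 := neg_ne_zero.mpr hz
    rw [pow_succ, div_right_comm, mul_div_assoc, div_self this, mul_one]
  simp_rw [h4] at h3
  rw [h3.tsum_eq, div_neg, neg_neg]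

lemma eS_cont0 : ContinuousAt eS 0 := by
  have h : ContinuousOn eS (Metric.ball 0 1) := by
    unfold eS
    refine continuousOn_tsum (u := fun k : ℕ => (1:ℝ) ^ (k+1) / (Nat.factorial (k+1) : ℝ)) (by intro i; fun_prop) 
      ((summable_nat_add_iff 1).mpr (Real.summable_pow_div_factorial 1)) ?_
    intro n y hy
    have hy' : ‖y‖ ≤ 1 := by simpa using (mem_ball_zero_iff.mp hy).le
    rw [norm_div, norm_pow, norm_neg, Complex.norm_natCast]
    have h1 : (0:ℝ) < (n+1).factorial := by exact_mod_cast (n+1).factorial_pos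
    have h2 : ((n+1).factorial : ℝ) ≤ (((n + 1) * (n+1).factorial : ℕ) : ℝ) := by
      exact_mod_cast Nat.le_mul_of_pos_left _ n.succ_pos
    gcongr
  exact h.continuousAt (Metric.ball_mem_nhds _ one_pos)

lemma E1_deriv {z : ℂ} (hz : z ∈ slitPlane) : HasDerivAt expIntegralE1 (-exp (-z) / z) z := by
  have hz0 := slitPlane_ne_zero hz
  have h := ((hasDerivAt_const z (-(Real.eulerMascheroniConstant : ℂ))).sub (hasDerivAt_log hz)).sub (eS_deriv hz0)
  refine (h.congr_deriv ?_)
  field_simp; ring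

lemma gamma_log_int : IntegrableOn (fun t : ℝ => (Real.log t : ℂ) * (Real.exp (-t) : ℂ)) (Ioi 0) ∧
    ∫ t in Ioi (0:ℝ), (Real.log t : ℂ) * (Real.exp (-t) : ℂ) = -(Real.eulerMascheroniConstant : ℂ) := by
  have h := mellin_hasDerivAt_of_isBigO_rpow (E := ℂ) (a := 2) (b := 0) (s := 1)
    (f := fun x => ((Real.exp (-x) : ℝ) : ℂ))
    (by
      refine (Continuous.continuousOn ?_).locallyIntegrableOn measurableSet_Ioi
      exact continuous_ofReal.comp (Real.continuous_exp.comp continuous_neg))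
    (by
      rw [← isBigO_norm_left]
      simp_rw [norm_real, isBigO_norm_left]
      simpa only [neg_one_mul] using (isLittleO_exp_neg_mul_rpow_atTop zero_lt_one _).isBigO)
    (by simp)
    (by
      simp_rw [neg_zero, Real.rpow_zero]
      refine isBigO_const_of_tendsto (?_ : Tendsto _ _ (𝓝 (1 : ℂ))) one_ne_zero
      rw [(by simp : (1 : ℂ) = Real.exp (-0))]
      exact (continuous_ofReal.comp (Real.continuous_exp.comp continuous_neg)).continuousWithinAt)
    (by simp)
  obtain ⟨h1, h2⟩ := h
  constructor
  · unfold MellinConvergent at h1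
    simpa using h1
  · rw [← GammaIntegral_eq_mellin] at h2
    have h3 : HasDerivAt GammaIntegral (-(Real.eulerMascheroniConstant : ℂ)) 1 := by
      refine Complex.hasDerivAt_Gamma_one.congr_of_eventuallyEq ?_
      have : {s : ℂ | 0 < s.re} ∈ 𝓝 (1:ℂ) :=
        (isOpen_lt continuous_const continuous_re).mem_nhds (by simp)
      filter_upwards [this] with s hs
      exact (Gamma_eq_integral hs).symm
    rw [← h2.unique h3, mellin]
    simp

lemma E1_real_tendsto : Tendsto (fun t : ℝ => expIntegralE1 (t : ℂ)) atTop (𝓝 0) := by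
  set Φ : ℝ → ℂ := fun t => ((1 - Real.exp (-t) : ℝ) : ℂ) * (Real.log t : ℂ) + eS t with hΦ
  have hderiv : ∀ t ∈ Ioi (0:ℝ), HasDerivAt Φ ((Real.log t : ℂ) * (Real.exp (-t) : ℂ)) t := by
    intro t ht
    have ht0 : (t:ℂ) ≠ 0 := by exact_mod_cast (ne_of_gt ht)
    have h1 : HasDerivAt (fun t : ℝ => ((1 - Real.exp (-t) : ℝ) : ℂ)) ((Real.exp (-t) : ℝ) : ℂ) t := by
      apply HasDerivAt.ofReal_comp
      have := ((hasDerivAt_neg t).exp).const_sub 1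
      simpa using this
    have h2 : HasDerivAt (fun t : ℝ => (Real.log t : ℂ)) ((t⁻¹ : ℝ) : ℂ) t :=
      (Real.hasDerivAt_log (ne_of_gt ht)).ofReal_comp
    have h3 := (eS_deriv ht0).comp_ofReal
    refine ((h1.mul h2).add h3).congr_deriv ?_
    push_cast
    field_simp
    ring
  have hcont : ContinuousWithinAt Φ (Ici 0) 0 := by
    refine ContinuousWithinAt.add ?_ ?_
    · have h0 : ((1 - Real.exp (-0) : ℝ) : ℂ) * (Real.log 0 : ℂ) = 0 := by simp
      unfold ContinuousWithinAt
      beta_reduce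
      rw [h0]
      have hl : Tendsto (fun t : ℝ => |t * Real.log t|) (𝓝[Ici 0] 0) (𝓝 0) := by
        have := (Real.continuous_mul_log.abs.tendsto 0).mono_left (nhdsWithin_le_nhds (s := Ici (0:ℝ)))
        simpa using this
      refine squeeze_zero_norm' ?_ hl
      filter_upwards [self_mem_nhdsWithin] with t ht
      rw [← ofReal_mul, norm_real, Real.norm_eq_abs, abs_mul, abs_mul]
      gcongr 1
      have h1 := Real.add_one_le_exp (-t)
      have h2 : Real.exp (-t) ≤ 1 := Real.exp_le_one_iff.mpr (by simpa using ht)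
      rw [abs_of_nonneg (by linarith), abs_of_nonneg ht]
      linarith
    · apply ContinuousAt.continuousWithinAt
      exact ContinuousAt.comp (f := fun t : ℝ => (t:ℂ)) (by rw [Complex.ofReal_zero]; exact eS_cont0) (by fun_prop)
  obtain ⟨hi, hv⟩ := gamma_log_int
  have hlim := tendsto_limUnder_of_hasDerivAt_of_integrableOn_Ioi hderiv hi
  have hval := integral_Ioi_of_hasDerivAt_of_tendsto hcont hderiv hi hlim
  have hΦ0 : Φ 0 = 0 := by simp [hΦ, eS_zero]
  rw [hv, hΦ0, sub_zero] at hval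
  rw [← hval] at hlim
  have hd : Tendsto (fun t : ℝ => ((Real.exp (-t) * Real.log t : ℝ) : ℂ)) atTop (𝓝 0) := by
    rw [← ofReal_zero]
    refine (continuous_ofReal.tendsto 0).comp ?_
    have h1 : Tendsto (fun t : ℝ => t * Real.exp (-t)) atTop (𝓝 0) := by
      have := Real.tendsto_pow_mul_exp_neg_atTop_nhds_zero 1
      simpa using this
    refine squeeze_zero_norm' ?_ h1
    filter_upwards [eventually_ge_atTop 1] with t ht
    have h2 := Real.log_nonneg ht
    have h3 := Real.log_le_self (by linarith : 0 ≤ t)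
    rw [Real.norm_of_nonneg (by positivity), mul_comm]
    gcongr
  have hfin := (hlim.add hd).const_sub (-(Real.eulerMascheroniConstant : ℂ))
  rw [add_zero, sub_self] at hfin
  refine hfin.congr' ?_
  filter_upwards [eventually_gt_atTop 0] with t ht
  rw [E1_eq, hΦ, ← Complex.ofReal_log ht.le]
  push_cast
  ring

lemma slit_mul {z : ℂ} (hz : z ∈ slitPlane) {r : ℝ} (hr : 0 < r) : z * (r : ℂ) ∈ slitPlane := by
  rw [mem_slitPlane_iff] at hz ⊢
  simp only [re_mul_ofReal, im_mul_ofReal]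
  rcases hz with h | h
  · left; positivity
  · right; exact mul_ne_zero h hr.ne'

lemma E1_integral {s : ℂ} (hs : s - 1 ∈ slitPlane) {x : ℝ} (hx : 2 ≤ x) :
    ∫ u in (2:ℝ)..x, (u:ℂ) ^ (-s) / (Real.log u : ℂ) =
      -expIntegralE1 ((s - 1) * (Real.log x : ℂ)) + expIntegralE1 ((s - 1) * (Real.log 2 : ℂ)) := by
  have hpos : ∀ u ∈ uIcc (2:ℝ) x, 2 ≤ u := by
    intro u hu; rw [uIcc_of_le hx] at hu; exact hu.1
  have hderiv : ∀ u ∈ uIcc (2:ℝ) x, HasDerivAt (fun u : ℝ => -expIntegralE1 ((s - 1) * (Real.log u : ℂ)))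
      ((u:ℂ) ^ (-s) / (Real.log u : ℂ)) u := by
    intro u hu
    have hu2 := hpos u hu
    have hu0 : u ≠ 0 := by linarith
    have huc : (u:ℂ) ≠ 0 := by exact_mod_cast hu0
    have hl : 0 < Real.log u := Real.log_pos (by linarith)
    have hlc : (Real.log u : ℂ) ≠ 0 := by exact_mod_cast hl.ne'
    have h1 : HasDerivAt (fun u : ℝ => (s - 1) * (Real.log u : ℂ)) ((s - 1) * ((u⁻¹ : ℝ) : ℂ)) u :=
      ((Real.hasDerivAt_log hu0).ofReal_comp).const_mul _
    have h2 := ((E1_deriv (slit_mul hs hl)).scomp u h1).neg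
    refine h2.congr_deriv ?_
    have hs1 := slitPlane_ne_zero hs
    have e : (u:ℂ) ^ (-s) = exp (-((s - 1) * (Real.log u : ℂ))) * (u:ℂ)⁻¹ := by
      rw [← cpow_neg_one, cpow_def_of_ne_zero huc, cpow_def_of_ne_zero huc, ← Complex.exp_add,
        ← Complex.ofReal_log (by linarith)]
      congr 1; ring
    rw [e, smul_eq_mul]
    push_cast
    field_simp
  have hcont : ContinuousOn (fun u : ℝ => (u:ℂ) ^ (-s) / (Real.log u : ℂ)) (uIcc 2 x) := by
    intro u hu
    have hu2 := hpos u hu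
    have hl : 0 < Real.log u := Real.log_pos (by linarith)
    apply ContinuousAt.continuousWithinAt
    refine ContinuousAt.div ?_ ?_ (by exact_mod_cast hl.ne')
    · exact continuousAt_ofReal_cpow_const _ _ (Or.inr (by linarith))
    · exact continuous_ofReal.continuousAt.comp (Real.continuousAt_log (by linarith))
  rw [intervalIntegral.integral_eq_sub_of_hasDerivAt hderiv hcont.intervalIntegrable]
  ring

end partC

section partD
open Complex Set MeasureTheory Topology Asymptotics
open Chebyshev

lemma thR_meas : Measurable thR := by
  unfold thR; exact theta_mono.measurable.sub measurable_id

lemma thR_ii (a b : ℝ) : IntervalIntegrable thR volume a b :=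
  (theta_mono.intervalIntegrable).sub (continuous_id.intervalIntegrable _ _)

/-- The function whose Mellin transform governs the error term. -/
noncomputable def qf (j : ℕ) (t : ℝ) : ℂ :=
  (Ioi (2:ℝ)).indicator (fun t : ℝ => ((thR t / Real.log t ^ j : ℝ) : ℂ)) t

lemma qf_meas (j : ℕ) : Measurable (qf j) := by
  unfold qf
  refine Measurable.indicator ?_ measurableSet_Ioi
  have := thR_meas
  fun_prop

lemma qf_bound (RH : RiemannHypothesis) (j : ℕ) {β : ℝ} (h1 : 1/2 < β) (h2 : β < 1) :
    ∃ C : ℝ, 0 < C ∧ ∀ t : ℝ, ‖qf j t‖ ≤ C * |t| ^ β := by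
  obtain ⟨C, hC, hb⟩ := theta_bound RH h1 h2
  have hl2 : 0 < Real.log 2 := Real.log_pos (by norm_num)
  refine ⟨C / Real.log 2 ^ j, by positivity, ?_⟩
  intro t
  unfold qf
  by_cases h : t ∈ Ioi (2:ℝ)
  · rw [indicator_of_mem h, norm_real, norm_div, Real.norm_eq_abs, norm_pow, Real.norm_eq_abs]
    have ht : (2:ℝ) < t := h
    have hl : Real.log 2 ≤ Real.log t := Real.log_le_log (by norm_num) ht.le
    rw [abs_of_pos (by linarith : 0 < Real.log t), abs_of_pos (by linarith : 0 < t)]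
    calc _ ≤ C * t ^ β / Real.log 2 ^ j := by
          gcongr
          exact hb t (by linarith)
      _ = _ := by ring
  · rw [indicator_of_notMem h, norm_zero]; positivity

lemma qf_locInt (RH : RiemannHypothesis) (j : ℕ) : LocallyIntegrable (qf j) := by
  obtain ⟨C, hC, hb⟩ := qf_bound RH j (β := 3/4) (by norm_num) (by norm_num)
  have hc : Continuous (fun t : ℝ => C * |t| ^ (3/4 : ℝ)) := by
    refine continuous_const.mul ?_
    exact (Real.continuous_rpow_const (by norm_num)).comp continuous_abs
  refine (hc.locallyIntegrable (μ := volume)).mono (qf_meas j).aestronglyMeasurable ?_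
  filter_upwards with t
  exact (hb t).trans (le_abs_self _)

lemma qf_top (RH : RiemannHypothesis) (j : ℕ) {β : ℝ} (h1 : 1/2 < β) (h2 : β < 1) :
    qf j =O[atTop] (fun t : ℝ => t ^ (-(-β))) := by
  obtain ⟨C, hC, hb⟩ := qf_bound RH j h1 h2
  refine IsBigO.of_bound C ?_
  filter_upwards [eventually_gt_atTop 0] with t ht
  rw [neg_neg, Real.norm_of_nonneg (by positivity)]
  simpa [abs_of_pos ht] using hb t

lemma qf_bot (j : ℕ) (b : ℝ) : qf j =O[𝓝[>] 0] (fun t : ℝ => t ^ (-b)) := by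
  have : qf j =ᶠ[𝓝[>] 0] (fun _ => (0:ℂ)) := by
    have : Iio (2:ℝ) ∈ 𝓝[>] (0:ℝ) := nhdsWithin_le_nhds (Iio_mem_nhds (by norm_num))
    filter_upwards [this] with t ht
    unfold qf
    rw [indicator_of_notMem]
    simpa using le_of_lt ht
  exact this.trans_isBigO (isBigO_zero _ _)

lemma exists_beta {s : ℂ} (hs : 1/2 < s.re) : ∃ β : ℝ, 1/2 < β ∧ β < 1 ∧ β < s.re := by
  refine ⟨min ((1/2 + s.re)/2) (3/4), lt_min (by linarith) (by norm_num), ?_, ?_⟩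
  · exact lt_of_le_of_lt (min_le_right _ _) (by norm_num)
  · exact lt_of_le_of_lt (min_le_left _ _) (by linarith)

lemma qf_conv (RH : RiemannHypothesis) (j : ℕ) {s : ℂ} (hs : 1/2 < s.re) :
    MellinConvergent (qf j) (-s) := by
  obtain ⟨β, h1, h2, h3⟩ := exists_beta hs
  exact mellinConvergent_of_isBigO_rpow ((qf_locInt RH j).locallyIntegrableOn _) (qf_top RH j h1 h2)
    (by simpa using h3) (qf_bot j (-s.re - 1)) (by simp)

lemma qf_diff (RH : RiemannHypothesis) (j : ℕ) {s : ℂ} (hs : 1/2 < s.re) :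
    DifferentiableAt ℂ (fun s => mellin (qf j) (-s)) s := by
  obtain ⟨β, h1, h2, h3⟩ := exists_beta hs
  have h := mellin_differentiableAt_of_isBigO_rpow (s := -s) ((qf_locInt RH j).locallyIntegrableOn _) (qf_top RH j h1 h2)
    (by simpa using h3) (qf_bot j (-s.re - 1)) (by simp)
  exact DifferentiableAt.comp (f := fun s : ℂ => -s) s h (by fun_prop)

lemma qf_tendsto (RH : RiemannHypothesis) (j : ℕ) {s : ℂ} (hs : 1/2 < s.re) :
    Tendsto (fun x : ℝ => ∫ t in (2:ℝ)..x, (t:ℂ) ^ (-s - 1) * ((thR t / Real.log t ^ j : ℝ) : ℂ)) atTop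
      (𝓝 (mellin (qf j) (-s))) := by
  have e : ∀ t : ℝ, (t:ℂ) ^ (-s - 1) • qf j t = (Ioi (2:ℝ)).indicator
      (fun t : ℝ => (t:ℂ) ^ (-s - 1) * ((thR t / Real.log t ^ j : ℝ) : ℂ)) t := by
    intro t
    unfold qf
    by_cases h : t ∈ Ioi (2:ℝ)
    · rw [indicator_of_mem h, indicator_of_mem h, smul_eq_mul]
    · rw [indicator_of_notMem h, indicator_of_notMem h, smul_zero]
  have hc := qf_conv RH j hs
  have hsub : Ioi (0:ℝ) ∩ Ioi 2 = Ioi 2 := by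
    apply inter_eq_right.mpr; intro t ht; exact lt_trans (by norm_num : (0:ℝ) < 2) ht
  unfold MellinConvergent at hc
  simp_rw [e] at hc
  have hi : IntegrableOn (fun t : ℝ => (t:ℂ) ^ (-s - 1) * ((thR t / Real.log t ^ j : ℝ) : ℂ)) (Ioi 2) := by
    have h2 : IntegrableOn _ (Ioi (2:ℝ)) volume := hc.mono_set (Ioi_subset_Ioi (by norm_num : (0:ℝ) ≤ 2))
    refine h2.congr_fun ?_ measurableSet_Ioi
    intro t ht
    simp only
    rw [indicator_of_mem ht]
  have h := intervalIntegral_tendsto_integral_Ioi 2 hi tendsto_id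
  unfold mellin
  simp_rw [e]
  rw [setIntegral_indicator measurableSet_Ioi, hsub]
  exact h
end partD

section partD2
open Complex Set MeasureTheory Topology Asymptotics
open Chebyshev

/-- The density of the prime zeta integral. -/
noncomputable def fs (s : ℂ) (u : ℝ) : ℂ := (u:ℂ) ^ (-s) / (Real.log u : ℂ)

/-- Its derivative. -/
noncomputable def fs' (s : ℂ) (u : ℝ) : ℂ :=
  -s * (u:ℂ) ^ (-s - 1) / (Real.log u : ℂ) - (u:ℂ) ^ (-s - 1) / (Real.log u : ℂ) ^ 2

lemma fs_deriv {s : ℂ} {u : ℝ} (hs : s ≠ 0) (hu : 1 < u) : HasDerivAt (fs s) (fs' s u) u := by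
  have hu0 : u ≠ 0 := by linarith
  have huc : (u:ℂ) ≠ 0 := by exact_mod_cast hu0
  have hl : 0 < Real.log u := Real.log_pos (by linarith)
  have hlc : (Real.log u : ℂ) ≠ 0 := by exact_mod_cast hl.ne'
  have h1 : HasDerivAt (fun u : ℝ => (u:ℂ) ^ (-s)) (-s * (u:ℂ) ^ (-s - 1)) u := by
    have := (hasDerivAt_ofReal_cpow_const' (x := u) hu0 (r := -s - 1) (by
      intro h; apply hs; linear_combination -h)).const_mul (-s)
    simp only [sub_add_cancel] at this
    refine this.congr_of_eventuallyEq ?_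
    filter_upwards with y
    field_simp
  have h2 : HasDerivAt (fun u : ℝ => (Real.log u : ℂ)) ((u⁻¹ : ℝ) : ℂ) u :=
    (Real.hasDerivAt_log hu0).ofReal_comp
  refine (h1.div h2 hlc).congr_deriv ?_
  unfold fs'
  have e : (u:ℂ) ^ (-s) = u * (u:ℂ) ^ (-s - 1) := by
    rw [show -s = 1 + (-s - 1) by ring, cpow_add _ _ huc, cpow_one]; ring_nf
  rw [e]
  push_cast
  field_simp

lemma fs'_cont (s : ℂ) {u : ℝ} (hu : 1 < u) : ContinuousAt (fs' s) u := by
  have hl : 0 < Real.log u := Real.log_pos (by linarith)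
  have hlc : (Real.log u : ℂ) ≠ 0 := by exact_mod_cast hl.ne'
  have h1 : ContinuousAt (fun u : ℝ => (u:ℂ) ^ (-s - 1)) u :=
    continuousAt_ofReal_cpow_const _ _ (Or.inr (by linarith))
  have h2 : ContinuousAt (fun u : ℝ => (Real.log u : ℂ)) u :=
    continuous_ofReal.continuousAt.comp (Real.continuousAt_log (by linarith))
  exact ((continuousAt_const.mul h1).div h2 hlc).sub (h1.div (h2.pow 2) (pow_ne_zero _ hlc))

lemma fs_prime_sum {s : ℂ} (hs : s ≠ 0) {x : ℝ} (hx : 2 ≤ x) :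
    ∑ p ∈ Nat.primesBelow (⌊x⌋₊ + 1), (p:ℂ) ^ (-s) =
      fs s x * theta x - ∫ t in (2:ℝ)..x, fs' s t * theta t := by
  set c : ℕ → ℂ := fun n => if n.Prime then (Real.log n : ℂ) else 0 with hc
  have hd : ∀ t ∈ Icc (2:ℝ) x, deriv (fs s) t = fs' s t := fun t ht =>
    (fs_deriv hs (by linarith [ht.1])).deriv
  have hcont : ContinuousOn (fs' s) (Icc 2 x) := fun t ht =>
    (fs'_cont s (by linarith [ht.1])).continuousWithinAt
  have key := sum_mul_eq_sub_sub_integral_mul (f := fs s) c (a := 2) (b := x) (by norm_num) hx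
    (fun t ht => (fs_deriv hs (by linarith [ht.1])).differentiableAt)
    ((hcont.integrableOn_Icc).congr_fun (fun t ht => (hd t ht).symm) measurableSet_Icc)
  have hth : ∀ t : ℝ, ∑ k ∈ Finset.Icc 0 ⌊t⌋₊, c k = (theta t : ℂ) := by
    intro t
    rw [theta_eq_sum_Icc, Finset.sum_filter]
    push_cast
    apply Finset.sum_congr rfl
    intro n _
    rw [hc]; simp only
    split_ifs <;> simp
  simp_rw [hth] at key
  have hinteg : ∫ t in Ioc (2:ℝ) x, deriv (fs s) t * (theta t : ℂ) = ∫ t in (2:ℝ)..x, fs' s t * theta t := by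
    rw [intervalIntegral.integral_of_le hx]
    apply setIntegral_congr_fun measurableSet_Ioc
    intro t ht
    simp only
    rw [hd t (Ioc_subset_Icc_self ht)]
  rw [hinteg] at key
  have hfc : ∀ k : ℕ, 2 ≤ k → fs s k * c k = if k.Prime then (k:ℂ) ^ (-s) else 0 := by
    intro k hk
    rw [hc]; simp only
    split_ifs
    · unfold fs
      have : (Real.log (k:ℝ) : ℂ) ≠ 0 := by
        have : 0 < Real.log k := Real.log_pos (by exact_mod_cast hk)
        exact_mod_cast this.ne'
      push_cast at this ⊢
      field_simp
    · simp
  have hfl : 2 ≤ ⌊x⌋₊ := Nat.le_floor (by exact_mod_cast hx)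
  have h2 : fs s 2 * (theta 2 : ℂ) = (2:ℂ) ^ (-s) := by
    have := hth 2
    rw [← this]
    have e := hfc 2 le_rfl
    rw [if_pos Nat.prime_two] at e
    rw [show ⌊(2:ℝ)⌋₊ = 2 by simp]
    have : ∑ k ∈ Finset.Icc 0 2, c k = c 2 := by
      rw [show Finset.Icc 0 2 = {0,1,2} by rfl]
      simp [hc, Nat.not_prime_zero, Nat.not_prime_one]
    rw [this]
    simpa using e
  have hsum : ∑ p ∈ Nat.primesBelow (⌊x⌋₊ + 1), (p:ℂ) ^ (-s) = (2:ℂ) ^ (-s) +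
      ∑ k ∈ Finset.Ioc ⌊(2:ℝ)⌋₊ ⌊x⌋₊, fs s k * c k := by
    have e1 : ∑ k ∈ Finset.Ioc ⌊(2:ℝ)⌋₊ ⌊x⌋₊, fs s k * c k =
        ∑ k ∈ Finset.Ioc 2 ⌊x⌋₊, if k.Prime then (k:ℂ) ^ (-s) else 0 := by
      rw [show ⌊(2:ℝ)⌋₊ = 2 by simp]
      apply Finset.sum_congr rfl
      intro k hk
      exact hfc k (Finset.mem_Ioc.mp hk).1.le
    rw [e1, ← Finset.sum_filter]
    have e2 : Nat.primesBelow (⌊x⌋₊ + 1) = insert 2 (Finset.filter Nat.Prime (Finset.Ioc 2 ⌊x⌋₊)) := by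
      ext k
      simp only [Nat.primesBelow, Finset.mem_filter, Finset.mem_range, Finset.mem_insert, Finset.mem_Ioc]
      constructor
      · rintro ⟨a, b⟩
        have := b.two_le
        rcases eq_or_lt_of_le this with h | h
        · left; exact h.symm
        · right; exact ⟨⟨h, by omega⟩, b⟩
      · rintro (rfl | ⟨⟨a, b⟩, c⟩)
        · exact ⟨by omega, Nat.prime_two⟩
        · exact ⟨by omega, c⟩
    rw [e2, Finset.sum_insert (by simp)]
    simp
  rw [hsum, key, h2]
  ring

lemma fs_ibp {s : ℂ} (hs : s ≠ 0) {x : ℝ} (hx : 2 ≤ x) :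
    ∫ t in (2:ℝ)..x, fs s t = fs s x * x - fs s 2 * 2 - ∫ t in (2:ℝ)..x, fs' s t * t := by
  have hcont : ContinuousOn (fs' s) (uIcc 2 x) := fun t ht => by
    rw [uIcc_of_le hx] at ht
    exact (fs'_cont s (by linarith [ht.1])).continuousWithinAt
  have hcont2 : ContinuousOn (fs s) (uIcc 2 x) := fun t ht => by
    rw [uIcc_of_le hx] at ht
    exact (fs_deriv hs (by linarith [ht.1])).continuousAt.continuousWithinAt
  have hc3 : ContinuousOn (fun t : ℝ => (t:ℂ)) (uIcc 2 x) := by fun_prop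
  have h := intervalIntegral.integral_mul_deriv_eq_deriv_mul (u := fs s) (v := fun t : ℝ => (t:ℂ)) (u' := fs' s)
    (v' := fun _ => (1:ℂ)) (a := 2) (b := x) (fun t ht => by
      rw [uIcc_of_le hx] at ht
      exact (fs_deriv hs (by linarith [ht.1]))) (fun t _ => Complex.ofRealCLM.hasDerivAt) hcont.intervalIntegrable
      (by simp)
  simpa using h

lemma ii_ofReal {g : ℝ → ℝ} {a b : ℝ} (h : IntervalIntegrable g volume a b) :
    IntervalIntegrable (fun t => (g t : ℂ)) volume a b :=
  ⟨h.1.ofReal, h.2.ofReal⟩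

lemma B_formula {s : ℂ} (hs : s ≠ 0) {x : ℝ} (hx : 2 ≤ x) :
    (∫ t in (2:ℝ)..x, fs s t) - ∑ p ∈ Nat.primesBelow (⌊x⌋₊ + 1), (p:ℂ) ^ (-s) =
      -(fs s x * thR x) - fs s 2 * 2
      - s * (∫ t in (2:ℝ)..x, (t:ℂ) ^ (-s - 1) * ((thR t / Real.log t ^ 1 : ℝ) : ℂ))
      - ∫ t in (2:ℝ)..x, (t:ℂ) ^ (-s - 1) * ((thR t / Real.log t ^ 2 : ℝ) : ℂ) := by
  have hcont : ContinuousOn (fs' s) (uIcc 2 x) := fun t ht => by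
    rw [uIcc_of_le hx] at ht
    exact (fs'_cont s (by linarith [ht.1])).continuousWithinAt
  have hth : IntervalIntegrable (fun t => (theta t : ℂ)) volume 2 x :=
    ii_ofReal theta_mono.intervalIntegrable
  have hR : IntervalIntegrable (fun t => (thR t : ℂ)) volume 2 x := ii_ofReal (thR_ii 2 x)
  have i1 : IntervalIntegrable (fun t => fs' s t * theta t) volume 2 x := hth.continuousOn_mul hcont
  have i2 : IntervalIntegrable (fun t : ℝ => fs' s t * t) volume 2 x :=
    (hcont.mul (by fun_prop)).intervalIntegrable
  have hj : ∀ j : ℕ, IntervalIntegrable (fun t : ℝ => (t:ℂ) ^ (-s - 1) * ((thR t / Real.log t ^ j : ℝ) : ℂ)) volume 2 x := by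
    intro j
    have hc : ContinuousOn (fun t : ℝ => (t:ℂ) ^ (-s - 1) / ((Real.log t : ℂ) ^ j)) (uIcc 2 x) := by
      intro t ht
      rw [uIcc_of_le hx] at ht
      have hl : 0 < Real.log t := Real.log_pos (by linarith [ht.1])
      have hlc : (Real.log t : ℂ) ≠ 0 := by exact_mod_cast hl.ne'
      apply ContinuousAt.continuousWithinAt
      have h1 : ContinuousAt (fun u : ℝ => (u:ℂ) ^ (-s - 1)) t :=
        continuousAt_ofReal_cpow_const _ _ (Or.inr (by linarith [ht.1]))
      have h2 : ContinuousAt (fun u : ℝ => (Real.log u : ℂ)) t :=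
        continuous_ofReal.continuousAt.comp (Real.continuousAt_log (by linarith [ht.1]))
      exact h1.div (h2.pow j) (pow_ne_zero _ hlc)
    have := hR.continuousOn_mul hc
    refine this.congr ?_
    intro t _
    simp only
    push_cast; ring
  rw [fs_prime_sum hs hx, fs_ibp hs hx, ← intervalIntegral.integral_const_mul]
  have e : (∫ t in (2:ℝ)..x, fs' s t * theta t) - ∫ t in (2:ℝ)..x, fs' s t * t =
      -(∫ t in (2:ℝ)..x, s * ((t:ℂ) ^ (-s - 1) * ((thR t / Real.log t ^ 1 : ℝ) : ℂ)))
      - ∫ t in (2:ℝ)..x, (t:ℂ) ^ (-s - 1) * ((thR t / Real.log t ^ 2 : ℝ) : ℂ) := by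
    rw [← intervalIntegral.integral_sub i1 i2, neg_sub_left, ← intervalIntegral.integral_add (hj 2)
      ((hj 1).const_mul s), ← intervalIntegral.integral_neg]
    apply intervalIntegral.integral_congr
    intro t _
    unfold fs' thR
    push_cast
    ring
  have e2 : (thR x : ℂ) = theta x - x := by unfold thR; push_cast; rfl
  rw [e2]
  linear_combination e

/-- The limit of the error term. -/
noncomputable def Blim (s : ℂ) : ℂ := -(fs s 2 * 2) - s * mellin (qf 1) (-s) - mellin (qf 2) (-s)

lemma fsR_tendsto (RH : RiemannHypothesis) {s : ℂ} (hs : 1/2 < s.re) :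
    Tendsto (fun x : ℝ => fs s x * (thR x : ℂ)) atTop (𝓝 0) := by
  obtain ⟨β, h1, h2, h3⟩ := exists_beta hs
  obtain ⟨C, hC, hb⟩ := theta_bound RH h1 h2
  have hlim : Tendsto (fun x : ℝ => C * x ^ (-(s.re - β))) atTop (𝓝 0) := by
    simpa using (tendsto_rpow_neg_atTop (by linarith : 0 < s.re - β)).const_mul C
  refine squeeze_zero_norm' ?_ hlim
  filter_upwards [eventually_ge_atTop (Real.exp 1)] with x hx
  have hx0 : 0 < x := lt_of_lt_of_le (Real.exp_pos 1) hx
  have hx1 : 1 ≤ x := le_trans (by have := Real.add_one_le_exp (1:ℝ); linarith) hx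
  have hl : 1 ≤ Real.log x := by rwa [Real.le_log_iff_exp_le hx0]
  unfold fs
  rw [norm_mul, norm_div, norm_real, norm_real, Complex.norm_cpow_eq_rpow_re_of_pos hx0,
    Real.norm_eq_abs, Real.norm_eq_abs, abs_of_pos (by linarith)]
  calc _ ≤ x ^ (-s).re * (C * x ^ β) := by
        gcongr
        · exact div_le_self (by positivity) hl
        · exact hb x hx1
    _ = C * (x ^ (-s).re * x ^ β) := by ring
    _ = _ := by rw [← Real.rpow_add hx0]; congr 2; simp; ring

lemma Blim_tendsto (RH : RiemannHypothesis) {s : ℂ} (hs : 1/2 < s.re) :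
    Tendsto (fun x : ℝ => (∫ t in (2:ℝ)..x, fs s t) - ∑ p ∈ Nat.primesBelow (⌊x⌋₊ + 1), (p:ℂ) ^ (-s))
      atTop (𝓝 (Blim s)) := by
  have hs0 : s ≠ 0 := by rintro rfl; simp at hs; linarith
  have h := (((fsR_tendsto RH hs).neg.sub_const (fs s 2 * 2)).sub ((qf_tendsto RH 1 hs).const_mul s)).sub
    (qf_tendsto RH 2 hs)
  rw [neg_zero, zero_sub] at h
  refine h.congr' ?_
  filter_upwards [eventually_ge_atTop 2] with x hx
  rw [B_formula hs0 hx]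

lemma Blim_diff (RH : RiemannHypothesis) {s : ℂ} (hs : 1/2 < s.re) : DifferentiableAt ℂ Blim s := by
  have h1 := qf_diff RH 1 hs
  have h2 := qf_diff RH 2 hs
  unfold Blim fs
  refine DifferentiableAt.sub (DifferentiableAt.sub ?_ (differentiableAt_id.mul h1)) h2
  refine DifferentiableAt.neg (DifferentiableAt.mul_const (DifferentiableAt.div_const ?_ _) _)
  exact DifferentiableAt.const_cpow (by fun_prop) (Or.inl (by norm_num))

end partD2

section partD3
open Complex Set MeasureTheory Topology Asymptotics

/-- Terms of the convergent second order part of the logarithm of the Euler product. -/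
noncomputable def pa (n : ℕ) (s : ℂ) : ℂ :=
  if n.Prime then log (1 + (-(n:ℂ) ^ (-s))) - (-(n:ℂ) ^ (-s)) else 0

lemma prime_norm_le {n : ℕ} (hn : n.Prime) {s : ℂ} {σ : ℝ} (hσ : 1/2 < σ) (hs : σ ≤ s.re) :
    ‖-(n:ℂ) ^ (-s)‖ ≤ (n:ℝ) ^ (-σ) ∧ ‖-(n:ℂ) ^ (-s)‖ ≤ 3/4 := by
  have hn0 : 0 < n := hn.pos
  have hn2 : (2:ℝ) ≤ n := by exact_mod_cast hn.two_le
  have h1 : ‖-(n:ℂ) ^ (-s)‖ ≤ (n:ℝ) ^ (-σ) := by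
    rw [norm_neg, Complex.norm_natCast_cpow_of_pos hn0]
    exact Real.rpow_le_rpow_of_exponent_le (by linarith) (by simpa using hs)
  refine ⟨h1, h1.trans ?_⟩
  calc (n:ℝ) ^ (-σ) ≤ (n:ℝ) ^ (-(1/2) : ℝ) :=
        Real.rpow_le_rpow_of_exponent_le (by linarith) (by linarith)
    _ ≤ (2:ℝ) ^ (-(1/2) : ℝ) := Real.rpow_le_rpow_of_nonpos (by norm_num) hn2 (by norm_num)
    _ ≤ 3/4 := by
      rw [Real.rpow_neg (by norm_num), ← Real.sqrt_eq_rpow, inv_le_comm₀ (by positivity) (by norm_num)]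
      apply Real.le_sqrt_of_sq_le; norm_num

lemma pa_bound {σ : ℝ} (hσ : 1/2 < σ) (n : ℕ) (s : ℂ) (hs : σ ≤ s.re) :
    ‖pa n s‖ ≤ 2 * (n:ℝ) ^ (-(2 * σ)) := by
  unfold pa
  split_ifs with hn
  · obtain ⟨h1, h2⟩ := prime_norm_le hn hσ hs
    refine (norm_log_one_add_sub_self_le (by linarith)).trans ?_
    set a := ‖-(n:ℂ) ^ (-s)‖
    have ha : 0 ≤ a := norm_nonneg _
    have h3 : (1 - a)⁻¹ ≤ 4 := by
      rw [inv_le_comm₀ (by linarith) (by norm_num)]; linarith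
    have h5 : 0 ≤ (1 - a)⁻¹ := inv_nonneg.mpr (by linarith)
    have h4 : a ^ 2 ≤ (n:ℝ) ^ (-(2*σ)) := by
      calc a ^ 2 ≤ ((n:ℝ) ^ (-σ)) ^ 2 := by gcongr
        _ = _ := by
          rw [← Real.rpow_natCast, ← Real.rpow_mul (by positivity)]; congr 1; push_cast; ring
    calc a ^ 2 * (1 - a)⁻¹ / 2 ≤ (n:ℝ) ^ (-(2*σ)) * 4 / 2 := by gcongr
      _ = _ := by ring
  · rw [norm_zero]; positivity

lemma pa_bound_summable {σ : ℝ} (hσ : 1/2 < σ) : Summable (fun n : ℕ => 2 * (n:ℝ) ^ (-(2 * σ))) :=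
  (Real.summable_nat_rpow.mpr (by linarith)).mul_left 2

lemma pa_summable {s : ℂ} (hs : 1/2 < s.re) : Summable (fun n => pa n s) :=
  Summable.of_norm_bounded (pa_bound_summable hs) fun n => pa_bound hs n s le_rfl

lemma pa_diff {s : ℂ} (hs : 1/2 < s.re) : DifferentiableAt ℂ (fun s => ∑' n, pa n s) s := by
  set σ := (1/2 + s.re) / 2 with hσd
  have hσ : 1/2 < σ := by rw [hσd]; linarith
  have hσs : σ < s.re := by rw [hσd]; linarith
  have hU : IsOpen {s : ℂ | σ < s.re} := isOpen_lt continuous_const continuous_re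
  have h := differentiableOn_tsum_of_summable_norm (F := pa) (U := {s : ℂ | σ < s.re})
    (pa_bound_summable hσ) (by
      intro n w hw
      apply DifferentiableAt.differentiableWithinAt
      unfold pa
      split_ifs with hn
      · have hd : DifferentiableAt ℂ (fun s : ℂ => -(n:ℂ) ^ (-s)) w := by
          refine DifferentiableAt.neg (DifferentiableAt.const_cpow (by fun_prop) (Or.inl ?_))
          exact_mod_cast hn.ne_zero
        refine DifferentiableAt.sub (DifferentiableAt.clog (hd.const_add 1) ?_) hd
        apply mem_slitPlane_of_norm_lt_one
        have := (prime_norm_le hn hσ (le_of_lt hw)).2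
        linarith
      · fun_prop) hU (fun n w hw => pa_bound hσ n w (le_of_lt hw))
  exact (h s hσs).differentiableAt (hU.mem_nhds hσs)

lemma prod_eq_exp {s : ℂ} (hs : 1/2 < s.re) (N : ℕ) :
    ∏ p ∈ Nat.primesBelow N, (1 - (p:ℂ) ^ (-s)) =
      exp (∑ n ∈ Finset.range N, pa n s - ∑ p ∈ Nat.primesBelow N, (p:ℂ) ^ (-s)) := by
  have e : ∑ n ∈ Finset.range N, pa n s = ∑ p ∈ Nat.primesBelow N,
      (log (1 + (-(p:ℂ) ^ (-s))) - (-(p:ℂ) ^ (-s))) := by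
    rw [Nat.primesBelow, Finset.sum_filter]
    rfl
  rw [e, ← Finset.sum_sub_distrib, Complex.exp_sum]
  apply Finset.prod_congr rfl
  intro p hp
  have hpp : p.Prime := Nat.prime_of_mem_primesBelow hp
  rw [show log (1 + (-(p:ℂ) ^ (-s))) - (-(p:ℂ) ^ (-s)) - (p:ℂ) ^ (-s) = log (1 + (-(p:ℂ) ^ (-s))) by ring,
    exp_log, sub_eq_add_neg]
  apply slitPlane_ne_zero
  apply mem_slitPlane_of_norm_lt_one
  have := (prime_norm_le hpp hs le_rfl).2
  linarith

/-- Logarithm of the limit. -/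
noncomputable def Glim (s : ℂ) : ℂ :=
  -expIntegralE1 ((s - 1) * (Real.log 2 : ℂ)) + Blim s + ∑' n, pa n s

lemma Glim_tendsto (RH : RiemannHypothesis) {s : ℂ} (hs : 1/2 < s.re) (hs' : s - 1 ∈ slitPlane) :
    Tendsto (fun x : ℝ => exp (-expIntegralE1 ((s - 1) * (Real.log x : ℂ))) *
          ∏ p ∈ Nat.primesBelow (⌊x⌋₊ + 1), (1 - (p : ℂ) ^ (-s))) atTop (𝓝 (exp (Glim s))) := by
  have hN : Tendsto (fun x : ℝ => ⌊x⌋₊ + 1) atTop atTop :=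
    (tendsto_add_atTop_nat 1).comp tendsto_nat_floor_atTop
  have h1 := (pa_summable hs).hasSum.tendsto_sum_nat.comp hN
  have h2 := ((Blim_tendsto RH hs).const_add (-expIntegralE1 ((s - 1) * (Real.log 2 : ℂ)))).add h1
  have h3 := (continuous_exp.tendsto (Glim s)).comp h2
  refine h3.congr' ?_
  filter_upwards [eventually_ge_atTop 2] with x hx
  rw [prod_eq_exp hs, ← exp_add]
  simp only [Function.comp]
  congr 1
  have := E1_integral hs' hx
  unfold fs
  rw [this]
  ring

lemma Glim_diff (RH : RiemannHypothesis) {s : ℂ} (hs : 1/2 < s.re) (hs' : s - 1 ∈ slitPlane) :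
    DifferentiableAt ℂ Glim s := by
  have hl : 0 < Real.log 2 := Real.log_pos (by norm_num)
  unfold Glim
  refine DifferentiableAt.add (DifferentiableAt.add ?_ (Blim_diff RH hs)) (pa_diff hs)
  refine DifferentiableAt.neg ?_
  exact DifferentiableAt.comp (f := fun s : ℂ => (s - 1) * (Real.log 2 : ℂ)) s
    (E1_deriv (slit_mul hs' hl)).differentiableAt (by fun_prop)

lemma Glim_real (RH : RiemannHypothesis) {σ : ℝ} (hσ : 1 < σ) :
    exp (Glim σ) = (riemannZeta σ)⁻¹ := by
  have hs' : (σ:ℂ) - 1 ∈ slitPlane := by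
    rw [mem_slitPlane_iff]; left; simpa using hσ
  have h1 := Glim_tendsto RH (s := (σ:ℂ)) (by simp; linarith) hs'
  refine tendsto_nhds_unique h1 ?_
  have hz := riemannZeta_ne_zero_of_one_lt_re (s := (σ:ℂ)) (by simpa using hσ)
  have hN : Tendsto (fun x : ℝ => ⌊x⌋₊ + 1) atTop atTop :=
    (tendsto_add_atTop_nat 1).comp tendsto_nat_floor_atTop
  have h2 := ((riemannZeta_eulerProduct (s := (σ:ℂ)) (by simpa using hσ)).inv₀ hz).comp hN
  have hl : Tendsto (fun x : ℝ => (σ - 1) * Real.log x) atTop atTop :=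
    Real.tendsto_log_atTop.const_mul_atTop (by linarith)
  have h3 := (continuous_exp.tendsto _).comp (E1_real_tendsto.comp hl).neg
  have h4 := h3.mul h2
  rw [neg_zero, exp_zero, one_mul] at h4
  refine h4.congr ?_
  intro x
  simp only [Function.comp, Finset.prod_inv_distrib, inv_inv]
  push_cast
  rfl

lemma Glim_eq (RH : RiemannHypothesis) {s : ℂ} (hs : 1/2 < s.re) (hs' : s - 1 ∈ slitPlane) :
    exp (Glim s) = (riemannZeta s)⁻¹ := by
  set U : Set ℂ := {s : ℂ | 1/2 < s.re ∧ s - 1 ∈ slitPlane} with hU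
  have hUo : IsOpen U :=
    (isOpen_lt continuous_const continuous_re).inter (isOpen_slitPlane.preimage (by fun_prop))
  have h2U : (2:ℂ) ∈ U := by
    refine ⟨by norm_num, ?_⟩
    rw [mem_slitPlane_iff]; left; norm_num
  have hUc : IsPreconnected U := by
    have hst : StarConvex ℝ (2:ℂ) U := by
      intro z hz a b ha hb hab
      refine ⟨?_, ?_⟩
      · have := hz.1
        simp only [add_re, real_smul, re_ofReal_mul, re_ofNat]
        rcases hb.eq_or_lt with h0 | h0
        · rw [← h0] at hab ⊢; linarith
        · nlinarith [mul_pos h0 (sub_pos.mpr this)]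
      · have h := (starConvex_one_slitPlane hz.2 ha hb hab)
        have e : a • (2:ℂ) + b • z - 1 = a • (1:ℂ) + b • (z - 1) := by
          have : (a:ℂ) + b = 1 := by exact_mod_cast hab
          simp only [real_smul]
          linear_combination this
        rw [e]; exact h
    exact (hst.isPathConnected h2U).isConnected.isPreconnected
  have hf : AnalyticOnNhd ℂ (fun s => exp (Glim s)) U := by
    apply DifferentiableOn.analyticOnNhd _ hUo
    intro w hw
    exact ((Glim_diff RH hw.1 hw.2).cexp).differentiableWithinAt
  have hne : ∀ w ∈ U, w ≠ 1 := by
    rintro w hw rfl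
    exact slitPlane_ne_zero hw.2 (sub_self 1)
  have hg : AnalyticOnNhd ℂ (fun s => (riemannZeta s)⁻¹) U := by
    apply DifferentiableOn.analyticOnNhd _ hUo
    intro w hw
    apply DifferentiableAt.differentiableWithinAt
    refine DifferentiableAt.inv (differentiableAt_riemannZeta (hne w hw)) ?_
    rw [riemannZeta_eq_inv_sub_mul (hne w hw)]
    exact mul_ne_zero (inv_ne_zero (slitPlane_ne_zero hw.2)) (zeta1_ne_zero RH hw.1)
  have hfr : ∃ᶠ z in 𝓝[≠] (2:ℂ), exp (Glim z) = (riemannZeta z)⁻¹ := by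
    have ht : Tendsto (fun x : ℝ => (x:ℂ)) (𝓝[>] (2:ℝ)) (𝓝[≠] (2:ℂ)) := by
      rw [tendsto_nhdsWithin_iff]
      constructor
      · have := (continuous_ofReal.tendsto (2:ℝ)).mono_left (nhdsWithin_le_nhds (s := Ioi (2:ℝ)))
        simpa using this
      · filter_upwards [self_mem_nhdsWithin] with x hx
        simp only [mem_compl_iff, mem_singleton_iff]
        intro h
        have : x = 2 := by exact_mod_cast h
        exact (ne_of_gt hx) this
    refine ht.frequently (Eventually.frequently ?_)
    filter_upwards [self_mem_nhdsWithin] with x hx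
    exact Glim_real RH (lt_trans (by norm_num) hx)
  exact hf.eqOn_of_preconnected_of_frequently_eq hg hUc h2U hfr ⟨hs, hs'⟩

end partD3

/-- Assuming RH, for `Re(s) > 1/2` with `s - 1` off the nonpositive real axis,
`1/ζ(s) = lim_{x→∞} exp(−E₁((s-1)·log x)) · ∏_{p ≤ x} (1 - p^{-s})`. -/
theorem inv_zeta_euler_product (RH : RiemannHypothesis) (s : ℂ)
    (hs : 1 / 2 < s.re) (hs' : ¬∃ r : ℝ, r ≤ 0 ∧ s - 1 = (r : ℂ)) :
    Tendsto
      (fun x : ℝ =>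
        Complex.exp (-expIntegralE1 ((s - 1) * (Real.log x : ℂ))) *
          ∏ p ∈ Nat.primesBelow (⌊x⌋₊ + 1), (1 - (p : ℂ) ^ (-s)))
      atTop (nhds (riemannZeta s)⁻¹) := by
  have h : s - 1 ∈ Complex.slitPlane := by
    by_contra hcon
    rw [Complex.mem_slitPlane_iff] at hcon
    push Not at hcon
    refine hs' ⟨(s - 1).re, hcon.1, ?_⟩
    apply Complex.ext
    · rw [Complex.ofReal_re]
    · rw [Complex.ofReal_im]; exact hcon.2
  rw [← Glim_eq RH hs h]
  exact Glim_tendsto RH hs h
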